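/- arXiv:math/0508326 — 3 statements merged into one kernel-verified Lean document; each statement's English description precedes it below -/
import Mathlib

section
/- Let n ≥ 2, d ≥ 1 and ε > 0. There exists a constant C = C(d,n,ε) with the following property. Let F ∈ ℤ[x_0,…,x_n] be a primitive homogeneous polynomial of degree d which is irreducible over ℚ and not divisible by x_0 (so the hyperplane x_0 = 0 intersects X = {F = 0} ⊂ P^n properly), set r = n−1, and let B ≥ 1 be real. Let p_1,…,p_t be distinct primes and for each i let P_i ∈ P^n(𝔽_{p_i}) be a point on the reduction X_{p_i} of multiplicity μ_i ≥ 1 with x_0-coordinate nonzero, and suppose that p_1^{(d/μ_1)^{1/r}}⋯p_t^{(d/μ_t)^{1/r}} ≥ B^{1+ε}. Then there exists a homogeneous polynomial G ∈ ℚ[x_0,…,x_n] of degree at most C which is not divisible by F and which vanishes at every rational point of X representable by an integer tuple (1,x_1,…,x_n) with |x_m| ≤ B for 1 ≤ m ≤ n whose reduction mod p_i equals P_i for every i. -/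
open MvPolynomial

/-- `v` reduces mod `p` to the same point of `P^n(𝔽_p)` as the integer tuple `ξ`. -/
def ReducesTo {n : ℕ} (p : ℕ) (ξ : Fin n → ℤ) (v : Fin n → ZMod p) : Prop :=
  ∃ c : ZMod p, c ≠ 0 ∧ (fun i => ((ξ i : ZMod p))) = c • v

/-- The point of `P^n(𝔽_p)` represented by `v` has multiplicity `μ` on the reduction
`X_p = {F ≡ 0 (mod p)}`. -/
def MultiplicityAt {n : ℕ} (p : ℕ) (F : MvPolynomial (Fin n) ℤ) (v : Fin n → ZMod p)
    (μ : ℕ) : Prop :=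
  (∀ j < μ, homogeneousComponent j
      (bind₁ (fun i => C (v i) + X i) (MvPolynomial.map (Int.castRingHom (ZMod p)) F)) = 0) ∧
  homogeneousComponent μ
      (bind₁ (fun i => C (v i) + X i) (MvPolynomial.map (Int.castRingHom (ZMod p)) F)) ≠ 0


noncomputable def TT (n k : ℕ) : Finset (Fin n →₀ ℕ) :=
  (Finset.range k).biUnion fun i => Finset.finsuppAntidiag Finset.univ i

lemma mem_TT {n k : ℕ} {a : Fin n →₀ ℕ} : a ∈ TT n k ↔ a.degree < k := by
  simp [TT, Finset.mem_finsuppAntidiag, Finsupp.degree_eq_sum]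

lemma card_TT (r k : ℕ) : (TT (r+1) k).card = ∑ i ∈ Finset.range k, (i + r).choose r := by
  unfold TT
  rw [Finset.card_biUnion]
  · refine Finset.sum_congr rfl fun i _ => ?_
    rw [Finset.card_finsuppAntidiag_nat_eq_choose]
    simp only [Finset.card_univ, Fintype.card_fin]
    rw [show r + 1 + i - 1 = i + r by omega, Nat.choose_symm_add]
  · intro i _ j _ hij
    rw [Function.onFun, Finset.disjoint_left]
    intro a ha hb
    rw [Finset.mem_finsuppAntidiag] at ha hb
    exact hij (ha.1.symm.trans hb.1)

/-- exponents of degree `< k` not above `l`. -/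
noncomputable def EE {n : ℕ} (l : Fin n →₀ ℕ) (k : ℕ) : Finset (Fin n →₀ ℕ) := by
  classical exact (TT n k).filter fun a => ¬ l ≤ a

lemma mem_EE {n k : ℕ} {l a : Fin n →₀ ℕ} : a ∈ EE l k ↔ a.degree < k ∧ ¬ l ≤ a := by
  simp [EE, mem_TT]

noncomputable def hh (r m k : ℕ) : ℕ := ∑ i ∈ Finset.Ico (k - m) k, (i + r).choose r

lemma card_EE {r k : ℕ} (l : Fin (r+1) →₀ ℕ) : (EE l k).card = hh r l.degree k := by
  classical
  have h1 : ((TT (r+1) k).filter fun a => l ≤ a).card = (TT (r+1) (k - l.degree)).card := by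
    symm
    refine Finset.card_bij (fun a _ => a + l) ?_ ?_ ?_
    · intro a ha
      rw [mem_TT] at ha
      simp only [Finset.mem_filter, mem_TT, map_add]
      exact ⟨by omega, le_add_self⟩
    · intro a _ b _ h; exact add_right_cancel h
    · intro b hb
      simp only [Finset.mem_filter, mem_TT] at hb
      obtain ⟨hb1, c, rfl⟩ := hb.1, exists_add_of_le hb.2
      refine ⟨c, ?_, add_comm _ _⟩
      rw [mem_TT]
      have := hb.1
      rw [map_add] at this
      omega
  have h2 := Finset.card_filter_add_card_filter_not (s := TT (r+1) k) (fun a => l ≤ a)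
  have h3 : (EE l k).card = ((TT (r+1) k).filter fun a => ¬ l ≤ a).card := by
    unfold EE; congr
  rw [h3]
  rw [h1, card_TT, card_TT] at h2
  have h4 := Finset.sum_range_add_sum_Ico (fun i => (i + r).choose r) (Nat.sub_le k l.degree)
  unfold hh
  omega

lemma hh_mono {r m m' k : ℕ} (h : m ≤ m') : hh r m k ≤ hh r m' k := by
  unfold hh
  refine Finset.sum_le_sum_of_subset (Finset.Ico_subset_Ico (by omega) le_rfl)

lemma hh_le (r m k : ℕ) : (hh r m k : ℝ) ≤ m * (k + r : ℝ)^r / r.factorial := by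
  unfold hh
  push_cast
  have : ∀ i ∈ Finset.Ico (k-m) k, ((i + r).choose r : ℝ) ≤ (k + r : ℝ)^r / r.factorial := by
    intro i hi
    rw [Finset.mem_Ico] at hi
    refine (Nat.choose_le_pow_div r (i + r)).trans ?_
    have : (i : ℝ) ≤ k := by exact_mod_cast hi.2.le
    push_cast
    gcongr
  refine (Finset.sum_le_card_nsmul _ _ _ this).trans ?_
  rw [nsmul_eq_mul, mul_div_assoc]
  have : ((Finset.Ico (k-m) k).card : ℝ) ≤ m := by
    rw [Nat.card_Ico]; exact_mod_cast (by omega)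
  gcongr

lemma le_hh (r m k : ℕ) (h : m ≤ k) : m * (k - m : ℝ)^r / r.factorial ≤ (hh r m k : ℝ) := by
  unfold hh
  push_cast
  have : ∀ i ∈ Finset.Ico (k-m) k, (k - m : ℝ)^r / r.factorial ≤ ((i + r).choose r : ℝ) := by
    intro i hi
    rw [Finset.mem_Ico] at hi
    refine le_trans ?_ (Nat.pow_le_choose r (i + r))
    rw [show i + r + 1 - r = i + 1 by omega]
    have : ((k - m : ℕ) : ℝ) ≤ (i + 1 : ℕ) := by exact_mod_cast (by omega)
    rw [Nat.cast_sub h] at this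
    have h0 : (0:ℝ) ≤ k - m := by rw [sub_nonneg]; exact_mod_cast h
    gcongr
  refine le_trans ?_ (Finset.card_nsmul_le_sum _ _ _ this)
  rw [nsmul_eq_mul, mul_div_assoc]
  have : ((Finset.Ico (k-m) k).card : ℝ) = m := by
    rw [Nat.card_Ico]; exact_mod_cast (by omega)
  rw [this]

lemma pow_diff_le (r : ℕ) (x : ℝ) (hx : 0 ≤ x) :
    (r + 1) * x ^ r ≤ (x + 1)^(r+1) - x^(r+1) ∧ (x + 1)^(r+1) - x^(r+1) ≤ (r+1) * (x+1)^r := by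
  induction r with
  | zero => constructor <;> simp
  | succ r ih =>
    obtain ⟨h1, h2⟩ := ih
    have e1 : (x+1)^(r+1) = (x+1)^r * (x+1) := pow_succ _ _
    have e2 : x^(r+1) = x^r * x := pow_succ _ _
    have e3 : (x+1)^(r+1+1) = (x+1)^(r+1) * (x+1) := pow_succ _ _
    have e4 : x^(r+1+1) = x^(r+1) * x := pow_succ _ _
    have h3 : x^r ≤ (x+1)^r := by gcongr; linarith
    have h4 : x^(r+1) ≤ (x+1)^(r+1) := by gcongr; linarith
    push_cast
    constructor
    · rw [e3, e4]
      nlinarith [mul_le_mul_of_nonneg_right h1 hx]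
    · rw [e3, e4]
      nlinarith [mul_le_mul_of_nonneg_right h2 (by linarith : (0:ℝ) ≤ x + 1)]

lemma sum_hh_le (r m K : ℕ) : ((∑ k ∈ Finset.Icc 1 K, hh r m k : ℕ) : ℝ) ≤
    m * (K + 1 + r : ℝ)^(r+1) / (r.factorial * (r + 1)) := by
  induction K with
  | zero => simp; positivity
  | succ K ih =>
    rw [Finset.sum_Icc_succ_top (by omega)]
    have h := hh_le r m (K+1)
    have h2 := (pow_diff_le r (K + 1 + r) (by positivity)).1
    push_cast at *
    have h3 : (m:ℝ) * (K + 1 + r : ℝ)^r / r.factorial ≤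
       m * (((K:ℝ)+1+r+1)^(r+1) - (K+1+r : ℝ)^(r+1)) / (r.factorial * (r+1)) := by
      rw [div_le_div_iff₀ (by positivity) (by positivity)]
      have := mul_le_mul_of_nonneg_left h2 (by positivity : (0:ℝ) ≤ m * r.factorial)
      nlinarith
    refine (add_le_add ih (h.trans h3)).trans (le_of_eq ?_)
    ring

lemma le_sum_hh (r m D : ℕ) (h : m ≤ D) : m * (D - m : ℝ)^(r+1) / (r.factorial * (r + 1)) ≤
    ((∑ k ∈ Finset.Icc 1 D, hh r m k : ℕ) : ℝ) := by
  induction D, h using Nat.le_induction with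
  | base => simp; positivity
  | succ K hK ih =>
    rw [Finset.sum_Icc_succ_top (by omega)]
    have h := le_hh r m (K+1) (by omega)
    have h0 : (0:ℝ) ≤ K - m := by rw [sub_nonneg]; exact_mod_cast hK
    have h2 := (pow_diff_le r (K - m) h0).2
    push_cast at *
    have h3 : m * (((K:ℝ)-m+1)^(r+1) - (K-m : ℝ)^(r+1)) / (r.factorial * (r+1))
       ≤ (m:ℝ) * (K - m + 1 : ℝ)^r / r.factorial := by
      rw [div_le_div_iff₀ (by positivity) (by positivity)]
      have := mul_le_mul_of_nonneg_left h2 (by positivity : (0:ℝ) ≤ m * r.factorial)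
      nlinarith
    rw [show (K:ℝ) - m + 1 = K + 1 - m by ring] at h3
    refine le_trans (le_of_eq ?_) (add_le_add ih (h3.trans h))
    ring

/-- layer-cake -/
lemma sum_ge_layer {ι : Type*} [Fintype ι] (w : ι → ℕ) (K : ℕ) (h : ℕ → ℕ)
    (hw : ∀ k ∈ Finset.Icc 1 K, (Finset.univ.filter fun j => w j < k).card ≤ h k) :
    ∑ k ∈ Finset.Icc 1 K, (Fintype.card ι - h k) ≤ ∑ j, w j := by
  have h1 : ∀ k ∈ Finset.Icc 1 K, Fintype.card ι - h k ≤ ∑ j, if k ≤ w j then 1 else 0 := by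
    intro k hk
    have := hw k hk
    have h2 := Finset.card_filter_add_card_filter_not (s := (Finset.univ : Finset ι)) (fun j => w j < k)
    rw [← Finset.card_filter]
    simp only [not_lt] at h2
    rw [Finset.card_univ] at h2
    omega
  refine (Finset.sum_le_sum h1).trans ?_
  rw [Finset.sum_comm]
  refine Finset.sum_le_sum fun j _ => ?_
  rw [← Finset.card_filter]
  calc _ ≤ (Finset.Icc 1 (w j)).card := by
        refine Finset.card_le_card fun k => ?_
        simp only [Finset.mem_filter, Finset.mem_Icc]
        omega
    _ = _ := by simp

lemma sum_degree_EE {r D : ℕ} (l : Fin (r+1) →₀ ℕ) :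
    (((∑ a ∈ EE l (D+1), a.degree : ℕ)) : ℝ) = D * hh r l.degree (D+1) -
      (∑ k ∈ Finset.Icc 1 D, hh r l.degree k : ℕ) := by
  have h1 : ∀ a ∈ EE l (D+1), a.degree = ∑ k ∈ Finset.Icc 1 D, if k ≤ a.degree then 1 else 0 := by
    intro a ha
    rw [mem_EE] at ha
    rw [← Finset.card_filter]
    calc a.degree = (Finset.Icc 1 a.degree).card := by simp
      _ = _ := by
        congr 1
        ext k
        simp only [Finset.mem_filter, Finset.mem_Icc]
        omega
  have h2 : ∑ a ∈ EE l (D+1), a.degree + ∑ k ∈ Finset.Icc 1 D, hh r l.degree k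
      = D * hh r l.degree (D+1) := by
    rw [Finset.sum_congr rfl h1, Finset.sum_comm, ← Finset.sum_add_distrib]
    rw [Finset.sum_congr rfl (g := fun _ => hh r l.degree (D+1))]
    · simp
    · intro k hk
      rw [Finset.mem_Icc] at hk
      rw [← Finset.card_filter, ← card_EE, ← card_EE,
        ← Finset.card_filter_add_card_filter_not (s := EE l (D+1)) (fun a => k ≤ a.degree)]
      congr 2
      ext a
      simp only [Finset.mem_filter, mem_EE]
      constructor
      · rintro ⟨h, h'⟩; exact ⟨⟨by omega, h'⟩, by omega⟩
      · rintro ⟨⟨h, h'⟩, h''⟩; exact ⟨by omega, h'⟩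
  rw [eq_sub_iff_add_eq]
  exact_mod_cast h2


open Filter Topology in
lemma tendsto_shift_div (c : ℝ) : Tendsto (fun D : ℕ => ((D:ℝ) + c) / D) atTop (𝓝 1) := by
  have h : Tendsto (fun D : ℕ => 1 + c / (D:ℝ)) atTop (𝓝 (1 + 0)) :=
    tendsto_const_nhds.add (tendsto_const_div_atTop_nhds_zero_nat c)
  rw [add_zero] at h
  refine h.congr' ?_
  filter_upwards [eventually_gt_atTop 0] with D hD
  have : (D:ℝ) ≠ 0 := by positivity
  field_simp

open Filter Topology in
lemma tendsto_log_shift_div (c : ℕ) :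
    Tendsto (fun D : ℕ => Real.log ((D:ℝ) + c) / D) atTop (𝓝 0) := by
  have h0 : Tendsto (fun x : ℝ => Real.log x / x) atTop (𝓝 0) := by
    have := Real.isLittleO_log_id_atTop.tendsto_div_nhds_zero
    simpa using this
  have h1 : Tendsto (fun D : ℕ => (D:ℝ) + c) atTop atTop :=
    tendsto_atTop_add_const_right _ _ tendsto_natCast_atTop_atTop
  have h2 := (h0.comp h1).mul (tendsto_shift_div c)
  rw [zero_mul] at h2
  refine h2.congr' ?_
  filter_upwards [eventually_gt_atTop 0] with D hD
  have : (D:ℝ) ≠ 0 := by positivity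
  have : (D:ℝ) + c ≠ 0 := by positivity
  simp only [Function.comp]
  field_simp

open Filter Topology in
lemma numeric (r d : ℕ) (hr : 1 ≤ r) (hd : 1 ≤ d) (ε : ℝ) (hε : 0 < ε) :
    ∃ D : ℕ, 3 ^ (r + 1) < hh r d (D + 1) ∧ ∃ Y : ℝ, ∃ K : ℕ → ℕ,
      (∀ μ ∈ Finset.Icc 1 d, ((d : ℝ) / μ) ^ ((1 : ℝ) / r) * Y ≤
        ((∑ k ∈ Finset.Icc 1 (K μ), (hh r d (D + 1) - hh r μ k) : ℕ) : ℝ)) ∧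
      ∀ W ℓ : ℝ, 0 ≤ ℓ → Real.log 2 ≤ W → (1 + ε) * ℓ ≤ W →
        Real.log ((hh r d (D + 1)).factorial) +
          (D * hh r d (D + 1) - (∑ k ∈ Finset.Icc 1 D, hh r d k : ℕ)) * ℓ < Y * W := by
  set a : ℝ := d / r.factorial - d / (r.factorial * (r + 1)) with ha
  have hrr : (1:ℝ) ≤ r := by exact_mod_cast hr
  have hdd : (1:ℝ) ≤ d := by exact_mod_cast hd
  have hfac : (0:ℝ) < r.factorial := by positivity
  have ha' : a = d / r.factorial * (r / (r + 1)) := by rw [ha]; field_simp; ring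
  have hapos : 0 < a := by rw [ha']; positivity
  obtain ⟨δ, hδ, hδε⟩ : ∃ δ : ℝ, 0 < δ ∧ δ + (1 + δ) / (1 + ε) < 1 - δ := by
    refine ⟨ε / (4 * (1 + ε)), by positivity, ?_⟩
    have h1 : 0 < 1 + ε := by linarith
    rw [← sub_pos]
    have : 1 - ε / (4 * (1 + ε)) - (ε / (4 * (1 + ε)) + (1 + ε / (4 * (1 + ε))) / (1 + ε)) =
       (ε * (2 * ε + 1)) / (4 * (1 + ε)^2) := by field_simp; ring
    rw [this]; positivity
  -- upper bound for the exponent of B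
  have f1 : ∀ᶠ D : ℕ in atTop, (D * hh r d (D + 1) - (∑ k ∈ Finset.Icc 1 D, hh r d k : ℕ) : ℝ)
      ≤ (1 + δ) * a * D ^ (r + 1) := by
    have t1 : Tendsto (fun D : ℕ => (d:ℝ) / r.factorial * (((D:ℝ) + (1 + r)) / D) ^ r -
        d / (r.factorial * (r + 1)) * (((D:ℝ) + (-d)) / D) ^ (r + 1)) atTop (𝓝 a) := by
      have := (((tendsto_shift_div (1 + r)).pow r).const_mul ((d:ℝ) / r.factorial)).sub
        (((tendsto_shift_div (-d)).pow (r+1)).const_mul ((d:ℝ) / (r.factorial * (r + 1))))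
      simpa using this
    filter_upwards [t1.eventually_lt_const (show a < (1 + δ) * a by nlinarith),
      eventually_ge_atTop d] with D h1 h2
    have hD : (0:ℝ) < D := by exact_mod_cast (by omega)
    have u1 := hh_le r d (D+1)
    have u2 := le_sum_hh r d D h2
    have h3 := mul_lt_mul_of_pos_right h1 (pow_pos hD (r+1))
    have e : (((d:ℝ) / r.factorial * (((D:ℝ) + (1 + r)) / D) ^ r -
        d / (r.factorial * (r + 1)) * (((D:ℝ) + (-d)) / D) ^ (r + 1))) * D ^ (r+1) =
        D * (d * (D + 1 + r : ℝ)^r / r.factorial) -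
        d * (D - d : ℝ)^(r+1) / (r.factorial * (r + 1)) := by
      rw [div_pow, div_pow, pow_succ (D:ℝ) r, ← sub_eq_add_neg, ← add_assoc]
      field_simp
    rw [e] at h3
    push_cast at u1 u2 ⊢
    have := mul_le_mul_of_nonneg_left u1 hD.le
    linarith
  have f2 : ∀ μ ∈ Finset.Icc 1 d, ∀ᶠ D : ℕ in atTop,
      ((d : ℝ) / μ) ^ ((1 : ℝ) / r) * ((1 - δ) * a * D ^ (r + 1)) ≤
        ((∑ k ∈ Finset.Icc 1 ⌊((d : ℝ) / μ) ^ ((1 : ℝ) / r) * D⌋₊,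
          (hh r d (D + 1) - hh r μ k) : ℕ) : ℝ) := by
    intro μ hμ
    rw [Finset.mem_Icc] at hμ
    have hμ1 : (1:ℝ) ≤ μ := by exact_mod_cast hμ.1
    set θ : ℝ := ((d : ℝ) / μ) ^ ((1 : ℝ) / r) with hθ
    have hθpos : 0 < θ := by rw [hθ]; positivity
    have hθr : θ ^ r = d / μ := by
      rw [hθ, ← Real.rpow_natCast, ← Real.rpow_mul (by positivity), one_div,
        inv_mul_cancel₀ (by positivity), Real.rpow_one]
    have tK : Tendsto (fun D : ℕ => ((⌊θ * D⌋₊ : ℕ) : ℝ) / D) atTop (𝓝 θ) :=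
      (tendsto_nat_floor_mul_div_atTop hθpos.le).comp tendsto_natCast_atTop_atTop
    have tK2 : Tendsto (fun D : ℕ => (((⌊θ * D⌋₊ : ℕ) : ℝ) + 1 + r) / D) atTop (𝓝 θ) := by
      have := tK.add (tendsto_const_div_atTop_nhds_zero_nat (1 + r : ℝ))
      rw [add_zero] at this
      refine this.congr fun D => ?_
      rw [← add_div, add_assoc]
    have t1 : Tendsto (fun D : ℕ => (((⌊θ * D⌋₊ : ℕ) : ℝ) / D) *
        ((d:ℝ) / r.factorial * (((D:ℝ) + (1 - d)) / D) ^ r) -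
        μ / (r.factorial * (r + 1)) * ((((⌊θ * D⌋₊ : ℕ) : ℝ) + 1 + r) / D) ^ (r + 1))
        atTop (𝓝 (θ * a)) := by
      have := (tK.mul (((tendsto_shift_div (1 - d)).pow r).const_mul ((d:ℝ) / r.factorial))).sub
        ((tK2.pow (r+1)).const_mul ((μ:ℝ) / (r.factorial * (r + 1))))
      convert this using 2
      rw [pow_succ, hθr, ha]
      have : (μ:ℝ) ≠ 0 := by positivity
      field_simp
      try ring
    filter_upwards [t1.eventually_const_lt (show θ * (1 - δ) * a < θ * a by
      have : 0 < θ * a := by positivity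
      nlinarith), eventually_ge_atTop d] with D h1 h2
    have hD : (0:ℝ) < D := by exact_mod_cast (by omega)
    have u1 := le_hh r d (D+1) (by omega)
    set K := ⌊θ * D⌋₊
    have u2 := sum_hh_le r μ K
    have h3 := mul_lt_mul_of_pos_right h1 (pow_pos hD (r+1))
    have e : ((K : ℝ) / D *
        ((d:ℝ) / r.factorial * (((D:ℝ) + (1 - d)) / D) ^ r) -
        μ / (r.factorial * (r + 1)) * (((K : ℝ) + 1 + r) / D) ^ (r + 1)) * D ^ (r+1) =
        K * (d * (D + 1 - d : ℝ)^r / r.factorial) -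
        μ * (K + 1 + r : ℝ)^(r+1) / (r.factorial * (r + 1)) := by
      rw [div_pow, div_pow, pow_succ (D:ℝ) r, ← add_sub_assoc]
      field_simp
    rw [e] at h3
    have u3 : (K * hh r d (D+1) : ℝ) - ((∑ k ∈ Finset.Icc 1 K, hh r μ k : ℕ) : ℝ) ≤
      ((∑ k ∈ Finset.Icc 1 K, (hh r d (D + 1) - hh r μ k) : ℕ) : ℝ) := by
      rw [sub_le_iff_le_add]
      norm_cast
      rw [← Finset.sum_add_distrib]
      calc K * hh r d (D+1) = ∑ k ∈ Finset.Icc 1 K, hh r d (D+1) := by simp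
        _ ≤ _ := Finset.sum_le_sum fun k _ => by omega
    push_cast at u1
    have := mul_le_mul_of_nonneg_left u1 (Nat.cast_nonneg (α := ℝ) K)
    linarith
  have f3 : ∀ᶠ D : ℕ in atTop, Real.log ((hh r d (D + 1)).factorial) ≤
      δ * a * D ^ (r + 1) * Real.log 2 := by
    have t1 : Tendsto (fun D : ℕ => (d:ℝ) / r.factorial * (((D:ℝ) + (1 + r)) / D) ^ r *
        (Real.log d / D + r * (Real.log ((D:ℝ) + (1 + r : ℕ)) / D))) atTop (𝓝 0) := by
      have := (((tendsto_shift_div (1 + r)).pow r).const_mul ((d:ℝ) / r.factorial)).mul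
        ((tendsto_const_div_atTop_nhds_zero_nat (Real.log d)).add
          ((tendsto_log_shift_div (1 + r)).const_mul (r:ℝ)))
      simpa using this
    have hl2 : 0 < Real.log 2 := Real.log_pos (by norm_num)
    filter_upwards [t1.eventually_lt_const (show 0 < δ * a * Real.log 2 by positivity),
      eventually_ge_atTop d] with D h1 h2
    have hD : (0:ℝ) < D := by exact_mod_cast (by omega)
    have u1 := hh_le r d (D+1)
    have h3 := mul_lt_mul_of_pos_right h1 (pow_pos hD (r+1))
    have e : (d:ℝ) / r.factorial * (((D:ℝ) + (1 + r)) / D) ^ r *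
        (Real.log d / D + r * (Real.log ((D:ℝ) + (1 + r : ℕ)) / D)) * D ^ (r+1) =
        (d * ((D + 1 : ℕ) + r : ℝ)^r / r.factorial) *
          (Real.log d + r * (Real.log ((D:ℝ) + (1 + r : ℕ)))) := by
      push_cast
      rw [div_pow, pow_succ (D:ℝ) r, ← add_assoc]
      field_simp
    rw [e] at h3
    rcases Nat.eq_zero_or_pos (hh r d (D+1)) with h0 | h0
    · rw [h0]; simp; positivity
    have g1 : Real.log ((hh r d (D + 1)).factorial) ≤
        hh r d (D+1) * Real.log (hh r d (D+1)) := by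
      rw [← Real.log_pow]
      refine Real.log_le_log (by positivity) ?_
      exact_mod_cast Nat.factorial_le_pow _
    have g2 : Real.log (hh r d (D+1)) ≤ Real.log d + r * (Real.log ((D:ℝ) + (1 + r : ℕ))) := by
      rw [← Real.log_pow, ← Real.log_mul (by positivity) (by positivity)]
      refine Real.log_le_log (by positivity) (u1.trans ?_)
      have : (1:ℝ) ≤ r.factorial := by exact_mod_cast Nat.one_le_iff_ne_zero.2 r.factorial_ne_zero
      push_cast
      rw [add_assoc]
      exact div_le_self (by positivity) this
    have g3 : 0 ≤ Real.log (hh r d (D+1)) := Real.log_natCast_nonneg _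
    have := mul_le_mul u1 g2 g3 (by positivity)
    linarith
  have f4 : ∀ᶠ D : ℕ in atTop, 3 ^ (r + 1) < hh r d (D + 1) := by
    filter_upwards [eventually_ge_atTop (3^(r+1))] with D h
    refine lt_of_le_of_lt h ?_
    unfold hh
    refine lt_of_lt_of_le ?_ (Finset.single_le_sum (f := fun i => (i + r).choose r)
      (fun _ _ => Nat.zero_le _) (show D ∈ _ by rw [Finset.mem_Ico]; omega))
    calc D < D + 1 := by omega
      _ = (D+1).choose 1 := by simp
      _ = (D + 1).choose D := by rw [← Nat.choose_symm_add]
      _ ≤ (D + r).choose D := Nat.choose_le_choose _ (by omega)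
      _ = _ := Nat.choose_symm_add
  have f2' := (Finset.eventually_all _).2 f2
  obtain ⟨D, g1, g2, g3, g4, g5⟩ :=
    (f1.and (f2'.and (f3.and (f4.and (eventually_gt_atTop 0))))).exists
  refine ⟨D, g4, (1 - δ) * a * D ^ (r + 1),
    fun μ => ⌊((d : ℝ) / μ) ^ ((1 : ℝ) / r) * D⌋₊, g2, ?_⟩
  intro W ℓ hℓ hW hWℓ
  have hX : 0 < a * (D:ℝ)^(r+1) := by
    have : (0:ℝ) < D := by exact_mod_cast g5
    positivity
  have hWpos : 0 < W := lt_of_lt_of_le (Real.log_pos (by norm_num)) hW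
  have hℓ' : ℓ ≤ W / (1 + ε) := by
    rw [le_div_iff₀ (by linarith)]; linarith
  set Xx := a * (D:ℝ)^(r+1)
  have k1 := mul_le_mul_of_nonneg_right g1 hℓ
  have k2 : δ * Xx * Real.log 2 ≤ δ * Xx * W := by gcongr
  have k3 : (1 + δ) * Xx * ℓ ≤ (1 + δ) * Xx * (W / (1 + ε)) := by gcongr
  have k4 : (δ + (1 + δ) / (1 + ε)) * (Xx * W) < (1 - δ) * (Xx * W) := by gcongr
  have k5 : (1 + δ) * Xx * (W / (1 + ε)) = (1 + δ) / (1 + ε) * (Xx * W) := by ring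
  have k6 : δ * a * (D:ℝ)^(r+1) * Real.log 2 = δ * Xx * Real.log 2 := by simp only [Xx]; ring
  have k7 : (1 + δ) * a * (D:ℝ)^(r+1) * ℓ = (1 + δ) * Xx * ℓ := by simp only [Xx]; ring
  have k8 : (1 - δ) * a * (D:ℝ)^(r+1) * W = (1 - δ) * (Xx * W) := by simp only [Xx]; ring
  rw [k8]
  rw [k7] at k1
  rw [k6] at g3
  linarith


lemma det_dvd_of_span {ι Γ : Type*} [Fintype ι] [DecidableEq ι] [Fintype Γ] [DecidableEq Γ]
    (p : ℤ) (w : Γ → ℕ)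
    (u : Γ → ι → ℤ) (hu : ∀ c i, p ^ (w c) ∣ u c i) (M : Matrix ι ι ℤ)
    (hM : ∀ j, M j ∈ Submodule.span ℤ (Set.range u)) (A : ℕ)
    (hA : ∀ f : ι → Γ, Function.Injective f → A ≤ ∑ j, w (f j)) : p ^ A ∣ M.det := by
  simp only [Submodule.mem_span_range_iff_exists_fun] at hM
  choose c hc using hM
  have h1 : M.det = Matrix.detRowAlternating (R := ℤ) (fun j => ∑ g, c j g • u g) := by
    simp only [hc]; rfl
  rw [h1, ← AlternatingMap.coe_multilinearMap, MultilinearMap.map_sum]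
  refine Finset.dvd_sum fun f _ => ?_
  rw [MultilinearMap.map_smul_univ]
  refine Dvd.dvd.mul_left ?_ _
  by_cases hf : Function.Injective f
  · choose u' hu' using hu
    have : (fun i => u (f i)) = fun i => p ^ (w (f i)) • u' (f i) := by
      ext i j; simp [hu']
    rw [this, MultilinearMap.map_smul_univ, Finset.prod_pow_eq_pow_sum, smul_eq_mul]
    exact (pow_dvd_pow p (hA f hf)).mul_right _
  · rw [Function.Injective] at hf
    push Not at hf
    obtain ⟨i, j, hij, hne⟩ := hf
    rw [AlternatingMap.coe_multilinearMap,
      AlternatingMap.map_eq_zero_of_eq _ _ (by simp [hij]) hne]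
    exact dvd_zero _

open Pointwise in
lemma local_span {n : ℕ} (p : ℕ) (hp : p.Prime) (g : MvPolynomial (Fin n) ℤ) (l : Fin n →₀ ℕ)
    (hl : ¬ (p : ℤ) ∣ coeff l g)
    (hlt : ∀ b, MonomialOrder.degLex.toSyn b < MonomialOrder.degLex.toSyn l → (p : ℤ) ∣ coeff b g)
    {ι : Type*} [Fintype ι] [DecidableEq ι] (φ : MvPolynomial (Fin n) ℤ →ₗ[ℤ] (ι → ℤ))
    (hφg : ∀ q, φ (q * g) = 0) (hφ : ∀ a i, (p : ℤ) ^ a.degree ∣ φ (monomial a 1) i)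
    (K : ℕ) (h : MvPolynomial (Fin n) ℤ) :
    φ h ∈ Submodule.span ℤ (Set.range (Sum.elim (fun a : EE l K => φ (monomial a.1 1))
      (fun i : ι => Pi.single i ((p : ℤ) ^ K)))) := by
  set N := Submodule.span ℤ (Set.range (Sum.elim (fun a : EE l K => φ (monomial a.1 1))
      (fun i : ι => Pi.single i ((p : ℤ) ^ K)))) with hN
  have hNE : ∀ a ∈ EE l K, φ (monomial a 1) ∈ N := fun a ha =>
    Submodule.subset_span ⟨Sum.inl ⟨a, ha⟩, rfl⟩
  have hNK : ∀ x : ι → ℤ, (∀ i, (p:ℤ)^K ∣ x i) → x ∈ N := by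
    intro x hx
    choose y hy using hx
    have : x = ∑ i, y i • Pi.single (M := fun _ => ℤ) i ((p : ℤ) ^ K) := by
      ext j
      rw [Finset.sum_apply, Finset.sum_eq_single j]
      · simp [hy, mul_comm]
      · intro b _ hb; simp [hb.symm]
      · simp
    rw [this]
    exact Submodule.sum_mem _ fun i _ => Submodule.smul_mem _ _
      (Submodule.subset_span ⟨Sum.inr i, rfl⟩)
  -- good polynomials
  let R : Submodule ℤ (ι → ℤ) := LinearMap.range φ
  let Q : Submodule ℤ (ι → ℤ) := N ⊔ (p : ℤ) • R
  have hpQ : ∀ q, φ ((p:ℤ) • q) ∈ Q := by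
    intro q
    refine Submodule.mem_sup_right ?_
    rw [map_smul]
    exact Submodule.smul_mem_pointwise_smul _ _ _ ⟨q, rfl⟩
  have hmon : ∀ a, φ (monomial a 1) ∈ Q := by
    by_contra hcon
    push Not at hcon
    classical
    let bad := (TT n K).filter fun a => φ (monomial a 1) ∉ Q
    have hbad : ∀ a, φ (monomial a 1) ∉ Q → a ∈ bad := by
      intro a ha
      refine Finset.mem_filter.2 ⟨?_, ha⟩
      rw [mem_TT]
      by_contra hk
      push Not at hk
      exact ha (Submodule.mem_sup_left (hNK _ fun i => (pow_dvd_pow _ hk).trans (hφ a i)))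
    obtain ⟨a0, ha0⟩ := hcon
    obtain ⟨a, hab, hmax⟩ := Finset.exists_max_image bad
      (fun a => MonomialOrder.degLex.toSyn a) ⟨a0, hbad a0 ha0⟩
    have hgood : ∀ b, MonomialOrder.degLex.toSyn a < MonomialOrder.degLex.toSyn b →
        φ (monomial b 1) ∈ Q := by
      intro b hb
      by_contra hb'
      exact absurd (hmax b (hbad b hb')) (not_le.2 hb)
    obtain ⟨haT, haQ⟩ := Finset.mem_filter.1 hab
    rw [mem_TT] at haT
    apply haQ
    by_cases hla : l ≤ a
    swap
    · exact Submodule.mem_sup_left (hNE a (mem_EE.2 ⟨haT, hla⟩))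
    obtain ⟨e, rfl⟩ := exists_add_of_le hla
    have hcop : IsCoprime (p:ℤ) (coeff l g) :=
      (Prime.coprime_iff_not_dvd (Nat.prime_iff_prime_int.1 hp)).2 hl
    obtain ⟨x, y, hxy⟩ := hcop
    -- monomial e * g
    have hg : ∀ b, coeff b g • φ (monomial (b + e) 1) ∈ Q ∨ b = l := by
      intro b
      rcases lt_trichotomy (MonomialOrder.degLex.toSyn b) (MonomialOrder.degLex.toSyn l) with
        h1 | h1 | h1
      · left
        obtain ⟨z, hz⟩ := hlt b h1
        rw [hz, mul_smul, ← map_smul, ← map_smul]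
        exact hpQ _
      · right
        exact MonomialOrder.degLex.toSyn.injective h1
      · left
        refine Submodule.smul_mem _ _ (hgood _ ?_)
        rw [map_add, map_add]
        exact add_lt_add_left h1 _
    have hsum : φ (monomial e 1 * g) = ∑ b ∈ g.support, coeff b g • φ (monomial (b + e) 1) := by
      conv_lhs => rw [g.as_sum, Finset.mul_sum, map_sum]
      refine Finset.sum_congr rfl fun b _ => ?_
      rw [monomial_mul, one_mul, add_comm e b, ← map_smul, smul_monomial, smul_eq_mul, mul_one]
    have hlsup : l ∈ g.support := by
      rw [mem_support_iff]; intro h0; rw [h0] at hl; exact hl (dvd_zero _)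
    rw [hφg, ← Finset.add_sum_erase _ _ hlsup] at hsum
    have h2 : coeff l g • φ (monomial (l + e) 1) ∈ Q := by
      rw [eq_neg_of_add_eq_zero_left hsum.symm]
      refine Submodule.neg_mem _ (Submodule.sum_mem _ fun b hb => ?_)
      exact (hg b).resolve_right (Finset.mem_erase.1 hb).1
    have h3 : φ (monomial (l + e) 1) = x • φ ((p:ℤ) • monomial (l + e) 1) +
        y • (coeff l g • φ (monomial (l + e) 1)) := by
      rw [map_smul, smul_smul, smul_smul, ← add_smul, hxy, one_smul]
    rw [h3]
    exact Submodule.add_mem _ (Submodule.smul_mem _ _ (hpQ _)) (Submodule.smul_mem _ _ h2)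
  have hall : ∀ q, φ q ∈ Q := by
    intro q
    rw [q.as_sum, map_sum]
    refine Submodule.sum_mem _ fun b _ => ?_
    have : monomial b (coeff b q) = coeff b q • monomial b (1:ℤ) := by
      rw [smul_monomial, smul_eq_mul, mul_one]
    rw [this, map_smul]
    exact Submodule.smul_mem _ _ (hmon b)
  have hiter : ∀ j : ℕ, ∀ q, ∃ q', φ q - (p:ℤ)^j • φ q' ∈ N := by
    intro j
    induction j with
    | zero => intro q; exact ⟨q, by simp⟩
    | succ j ih =>
      intro q
      obtain ⟨q', hq'⟩ := ih q
      obtain ⟨y, hy, z, hz, hyz⟩ := Submodule.mem_sup.1 (hall q')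
      obtain ⟨z', hz', rfl⟩ := (Submodule.mem_smul_pointwise_iff_exists _ _ _).1 hz
      obtain ⟨q'', rfl⟩ := hz'
      refine ⟨q'', ?_⟩
      have : φ q - (p:ℤ)^(j+1) • φ q'' = (φ q - (p:ℤ)^j • φ q') + (p:ℤ)^j • y := by
        rw [← hyz, pow_succ, smul_add, mul_smul]; abel
      rw [this]
      exact Submodule.add_mem _ hq' (Submodule.smul_mem _ _ hy)
  obtain ⟨q', hq'⟩ := hiter K h
  have := Submodule.add_mem _ hq' (hNK ((p:ℤ)^K • φ q') fun i => by
    simp)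
  simpa using this


lemma degree_succ {n : ℕ} (m : Fin (n+1) →₀ ℕ) : m.degree = m 0 + m.tail.degree := by
  simp only [Finsupp.degree_eq_sum, Fin.sum_univ_succ, Finsupp.tail_apply]

lemma tail_inj {n d : ℕ} {m m' : Fin (n+1) →₀ ℕ} (h : m.degree = d) (h' : m'.degree = d)
    (ht : m.tail = m'.tail) : m = m' := by
  rw [degree_succ] at h h'
  rw [← Finsupp.cons_tail m, ← Finsupp.cons_tail m', ht]
  rw [ht] at h
  congr 1
  omega

noncomputable def deh {R : Type*} [CommRing R] {n : ℕ} :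
    MvPolynomial (Fin (n+1)) R →ₐ[R] MvPolynomial (Fin n) R :=
  aeval (Fin.cons 1 X : Fin (n+1) → MvPolynomial (Fin n) R)

lemma deh_monomial {R : Type*} [CommRing R] {n : ℕ} (m : Fin (n+1) →₀ ℕ) (c : R) :
    deh (monomial m c) = monomial m.tail c := by
  rw [deh, aeval_monomial, Finsupp.prod_fintype _ _ (by simp), Fin.prod_univ_succ]
  rw [monomial_eq, Finsupp.prod_fintype _ _ (by simp)]
  simp [algebraMap_eq, Finsupp.tail_apply]

lemma coeff_deh {R : Type*} [CommRing R] {n d : ℕ} {F : MvPolynomial (Fin (n+1)) R}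
    (hF : F.IsHomogeneous d) {m : Fin (n+1) →₀ ℕ} (hm : m.degree = d) :
    coeff m.tail (deh F) = coeff m F := by
  classical
  have h : ∀ m' ∈ F.support, m'.degree = d := by
    intro m' hm'
    by_contra hne
    exact (mem_support_iff.1 hm') (hF.coeff_eq_zero hne)
  conv_lhs => rw [F.as_sum, map_sum, coeff_sum]
  simp only [deh_monomial, coeff_monomial]
  by_cases hmF : m ∈ F.support
  · rw [Finset.sum_eq_single_of_mem m hmF, if_pos rfl]
    intro b hb hne
    rw [if_neg]
    intro ht
    exact hne (tail_inj (h b hb) hm ht)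
  · rw [notMem_support_iff.1 hmF]
    refine Finset.sum_eq_zero fun b hb => ?_
    rw [if_neg]
    intro ht
    exact hmF (tail_inj (h b hb) hm ht ▸ hb)

lemma mem_support_deh {R : Type*} [CommRing R] {n : ℕ} {F : MvPolynomial (Fin (n+1)) R}
    {b : Fin n →₀ ℕ} (hb : b ∈ (deh F).support) : ∃ m ∈ F.support, m.tail = b := by
  classical
  by_contra hcon
  push Not at hcon
  rw [mem_support_iff] at hb
  apply hb
  conv_lhs => rw [F.as_sum, map_sum, coeff_sum]
  refine Finset.sum_eq_zero fun m hm => ?_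
  rw [deh_monomial, coeff_monomial, if_neg (hcon m hm)]

lemma exists_of_not_X_dvd {n : ℕ} {F : MvPolynomial (Fin (n+1)) ℤ} (h : ¬ (X 0 ∣ F)) :
    ∃ m ∈ F.support, m 0 = 0 := by
  by_contra hcon
  push Not at hcon
  apply h
  rw [F.as_sum]
  refine Finset.dvd_sum fun m hm => ?_
  rw [X_dvd_monomial]
  exact Or.inr (hcon m hm)

lemma degLex_degree_le {n : ℕ} {a b : Fin n →₀ ℕ}
    (h : MonomialOrder.degLex.toSyn a ≤ MonomialOrder.degLex.toSyn b) : a.degree ≤ b.degree :=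
  Finsupp.DegLex.monotone_degree h

lemma exists_lead {n d : ℕ} {F : MvPolynomial (Fin (n+1)) ℤ} (hF : F.IsHomogeneous d)
    (h : ¬ (X 0 ∣ F)) :
    deh (MvPolynomial.map (Int.castRingHom ℚ) F) ≠ 0 ∧
    (MonomialOrder.degLex.degree (deh (MvPolynomial.map (Int.castRingHom ℚ) F))).degree = d := by
  obtain ⟨m, hm, hm0⟩ := exists_of_not_X_dvd h
  have hmd : m.degree = d := by
    by_contra hne
    exact (mem_support_iff.1 hm) (hF.coeff_eq_zero hne)
  have hFQ : (MvPolynomial.map (Int.castRingHom ℚ) F).IsHomogeneous d := hF.map _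
  set f := deh (MvPolynomial.map (Int.castRingHom ℚ) F)
  have hmf : m.tail ∈ f.support := by
    rw [mem_support_iff, coeff_deh hFQ hmd, coeff_map]
    simpa using mem_support_iff.1 hm
  have hf0 : f ≠ 0 := by
    rintro h0; rw [h0] at hmf; simp at hmf
  refine ⟨hf0, le_antisymm ?_ ?_⟩
  · obtain ⟨m', hm', ht⟩ := mem_support_deh (MonomialOrder.degLex.degree_mem_support hf0)
    have hmd' : m'.degree = d := by
      by_contra hne
      exact (mem_support_iff.1 hm') (hFQ.coeff_eq_zero hne)
    rw [degree_succ] at hmd'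
    rw [← ht]; omega
  · have := degLex_degree_le (MonomialOrder.degLex.le_degree hmf)
    rw [degree_succ] at hmd
    omega

lemma mult_le {k : Type*} [Field k] {n d μ : ℕ} {F : MvPolynomial (Fin n) k}
    (hF : F.IsHomogeneous d) (v : Fin n → k)
    (hμ : homogeneousComponent μ (bind₁ (fun i => C (v i) + X i) F) ≠ 0) : μ ≤ d := by
  by_contra hcon
  push Not at hcon
  apply hμ
  apply homogeneousComponent_eq_zero
  refine lt_of_le_of_lt ?_ hcon
  rw [F.as_sum, map_sum]
  refine totalDegree_finsetSum_le fun m hm => ?_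
  have hmd : m.degree = d := by
    by_contra hne
    exact (mem_support_iff.1 hm) (hF.coeff_eq_zero hne)
  rw [bind₁_monomial]
  refine (totalDegree_mul _ _).trans ?_
  rw [totalDegree_C, zero_add]
  refine (totalDegree_finsetProd _ _).trans ?_
  rw [← hmd, Finsupp.degree_apply]
  refine Finset.sum_le_sum fun i _ => ?_
  refine (totalDegree_pow _ _).trans ?_
  have : (C (v i) + X i : MvPolynomial (Fin n) k).totalDegree ≤ 1 := by
    refine (totalDegree_add _ _).trans ?_
    simp
  calc _ ≤ m i * 1 := Nat.mul_le_mul_left _ this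
    _ = _ := mul_one _

lemma local_mult {k : Type*} [Field k] {n d μ : ℕ} {F : MvPolynomial (Fin (n+1)) k}
    (hF : F.IsHomogeneous d) (v : Fin (n+1) → k) (hv : v 0 ≠ 0)
    (hμ : homogeneousComponent μ (bind₁ (fun i => C (v i) + X i) F) ≠ 0) :
    ∃ a : Fin n →₀ ℕ, a.degree ≤ μ ∧
      coeff a (aeval (Fin.cons 1 (fun j => X j + C (v j.succ / v 0)) :
        Fin (n+1) → MvPolynomial (Fin n) k) F) ≠ 0 := by
  by_contra hcon
  push Not at hcon
  apply hμ
  let F2 : MvPolynomial (Fin (n+1)) k :=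
    aeval (Fin.cons (X 0) (fun j => X j.succ + C (v j.succ / v 0) * X 0) :
      Fin (n+1) → MvPolynomial (Fin (n+1)) k) F
  have hF2 : F2.IsHomogeneous d := by
    have := hF.aeval (Fin.cons (X 0) (fun j => X j.succ + C (v j.succ / v 0) * X 0) :
      Fin (n+1) → MvPolynomial (Fin (n+1)) k) (n := 1) (by
        intro i
        refine Fin.cases ?_ (fun j => ?_) i
        · simpa using isHomogeneous_X _ _
        · simp only [Fin.cons_succ]
          refine (isHomogeneous_X _ _).add ?_
          simpa using (isHomogeneous_C _ (v j.succ / v 0)).mul (isHomogeneous_X k (0 : Fin (n+1))))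
    rw [one_mul] at this
    exact this
  have h1 : deh F2 = aeval (Fin.cons 1 (fun j => X j + C (v j.succ / v 0)) :
        Fin (n+1) → MvPolynomial (Fin n) k) F := by
    have : (deh.comp (aeval (Fin.cons (X 0) (fun j => X j.succ + C (v j.succ / v 0) * X 0) :
      Fin (n+1) → MvPolynomial (Fin (n+1)) k))) = aeval (Fin.cons 1
        (fun j => X j + C (v j.succ / v 0)) : Fin (n+1) → MvPolynomial (Fin n) k) := by
      ext1 i
      refine Fin.cases ?_ (fun j => ?_) i
      · simp [deh]
      · simp [deh, algebraMap_eq]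
    exact DFunLike.congr_fun this F
  have h2 : bind₁ (fun i => C (v i) + X i) F = aeval (Fin.cons (C (v 0) + X 0)
      (fun j => X j.succ - C (v j.succ / v 0) * X 0) :
      Fin (n+1) → MvPolynomial (Fin (n+1)) k) F2 := by
    have : bind₁ (fun i => C (v i) + X i) = (aeval (Fin.cons (C (v 0) + X 0)
      (fun j => X j.succ - C (v j.succ / v 0) * X 0) :
      Fin (n+1) → MvPolynomial (Fin (n+1)) k)).comp
      (aeval (Fin.cons (X 0) (fun j => X j.succ + C (v j.succ / v 0) * X 0) :
      Fin (n+1) → MvPolynomial (Fin (n+1)) k)) := by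
      ext1 i
      refine Fin.cases ?_ (fun j => ?_) i
      · simp
      · simp only [bind₁_X_right, AlgHom.comp_apply, aeval_X, Fin.cons_succ, map_add, map_mul,
          Fin.cons_zero, algHom_C, algebraMap_eq]
        have : (C (v j.succ) : MvPolynomial (Fin (n+1)) k) = C (v j.succ / v 0) * C (v 0) := by
          rw [← C_mul, div_mul_cancel₀ _ hv]
        rw [this]; ring
    exact DFunLike.congr_fun this F
  rw [h2]
  have h3 : aeval (Fin.cons (C (v 0) + X 0)
      (fun j => X j.succ - C (v j.succ / v 0) * X 0) :
      Fin (n+1) → MvPolynomial (Fin (n+1)) k) F2 ∈ idealOfVars (Fin (n+1)) k ^ (μ + 1) := by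
    rw [F2.as_sum, map_sum]
    refine Ideal.sum_mem _ fun m hm => ?_
    have hmd : m.degree = d := by
      by_contra hne
      exact (mem_support_iff.1 hm) (hF2.coeff_eq_zero hne)
    have hmt : μ + 1 ≤ m.tail.degree := by
      by_contra hlt
      have := hcon m.tail (by omega)
      rw [← h1, coeff_deh hF2 hmd] at this
      exact (mem_support_iff.1 hm) this
    refine Ideal.pow_le_pow_right hmt ?_
    rw [aeval_monomial, Finsupp.prod_fintype _ _ (by simp), Fin.prod_univ_succ]
    refine Ideal.mul_mem_left _ _ (Ideal.mul_mem_left _ _ ?_)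
    rw [Finsupp.degree_eq_sum, ← Finset.prod_pow_eq_pow_sum]
    refine Ideal.prod_mem_prod fun j _ => ?_
    simp only [Fin.cons_succ, Finsupp.tail_apply]
    refine Ideal.pow_mem_pow ?_ _
    have hX : ∀ i, (X i : MvPolynomial (Fin (n+1)) k) ∈ idealOfVars (Fin (n+1)) k := fun i =>
      Ideal.subset_span ⟨i, rfl⟩
    exact Ideal.sub_mem _ (hX _) (Ideal.mul_mem_left _ _ (hX _))
  rw [mem_pow_idealOfVars_iff'] at h3
  ext a
  rw [coeff_homogeneousComponent, coeff_zero]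
  split_ifs with h
  · exact h3 a (by omega)
  · rfl

lemma exists_local_lead {n d μ : ℕ} (p : ℕ) (hp : p.Prime) {F : MvPolynomial (Fin (n+1)) ℤ}
    (hF : F.IsHomogeneous d) (v : Fin (n+1) → ZMod p) (hv : v 0 ≠ 0)
    (hμ : homogeneousComponent μ
      (bind₁ (fun i => C (v i) + X i) (MvPolynomial.map (Int.castRingHom (ZMod p)) F)) ≠ 0)
    (a : Fin n → ℤ) (ha : ∀ j, (a j : ZMod p) * v 0 = v j.succ) :
    ∃ l : Fin n →₀ ℕ, l.degree ≤ μ ∧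
      ¬ (p : ℤ) ∣ coeff l (aeval (Fin.cons 1 (fun j => X j + C (a j)) :
        Fin (n+1) → MvPolynomial (Fin n) ℤ) F) ∧
      ∀ b, MonomialOrder.degLex.toSyn b < MonomialOrder.degLex.toSyn l →
        (p : ℤ) ∣ coeff b (aeval (Fin.cons 1 (fun j => X j + C (a j)) :
        Fin (n+1) → MvPolynomial (Fin n) ℤ) F) := by
  have : Fact p.Prime := ⟨hp⟩
  obtain ⟨c, hc, hc0⟩ := local_mult (hF.map (Int.castRingHom (ZMod p))) v hv hμ
  set g := aeval (Fin.cons 1 (fun j => X j + C (a j)) : Fin (n+1) → MvPolynomial (Fin n) ℤ) F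
    with hg
  have hmap : aeval (Fin.cons 1 (fun j => X j + C (v j.succ / v 0)) :
        Fin (n+1) → MvPolynomial (Fin n) (ZMod p)) (MvPolynomial.map (Int.castRingHom (ZMod p)) F)
      = MvPolynomial.map (Int.castRingHom (ZMod p)) g := by
    have : ((aeval (Fin.cons 1 (fun j => X j + C (v j.succ / v 0)) :
        Fin (n+1) → MvPolynomial (Fin n) (ZMod p))).toRingHom.comp
          (MvPolynomial.map (Int.castRingHom (ZMod p)))) =
        (MvPolynomial.map (Int.castRingHom (ZMod p))).comp
          (aeval (Fin.cons 1 (fun j => X j + C (a j)) :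
            Fin (n+1) → MvPolynomial (Fin n) ℤ)).toRingHom := by
      refine MvPolynomial.ringHom_ext' (RingHom.ext_int _ _) fun i => ?_
      refine Fin.cases ?_ (fun j => ?_) i
      · simp
      · simp only [RingHom.comp_apply, AlgHom.toRingHom_eq_coe, RingHom.coe_coe, map_X, aeval_X,
          Fin.cons_succ, map_add, eq_intCast]
        rw [← ha j, mul_div_cancel_right₀ _ hv, map_intCast, map_intCast]
    exact DFunLike.congr_fun this F
  rw [hmap] at hc0
  have hdvd : ∀ b, (p:ℤ) ∣ coeff b g ↔ coeff b (MvPolynomial.map (Int.castRingHom (ZMod p)) g) = 0 := by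
    intro b
    rw [coeff_map, eq_intCast, ZMod.intCast_zmod_eq_zero_iff_dvd]
  obtain ⟨l, hl, hmin⟩ := Finset.exists_min_image
    (MvPolynomial.map (Int.castRingHom (ZMod p)) g).support
    (fun b => MonomialOrder.degLex.toSyn b) ⟨c, mem_support_iff.2 hc0⟩
  refine ⟨l, ?_, ?_, ?_⟩
  · exact (degLex_degree_le (hmin c (mem_support_iff.2 hc0))).trans hc
  · rw [hdvd]; exact mem_support_iff.1 hl
  · intro b hb
    rw [hdvd]
    by_contra hne
    exact absurd (hmin b (mem_support_iff.2 hne)) (not_le.2 hb)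


lemma exists_rel {ι P : Type*} [Fintype ι] [DecidableEq ι] (S : Set P) (ev : P → ι → ℤ)
    (h : ∀ x : ι → P, (∀ i, x i ∈ S) → (Matrix.of fun j i => ev (x i) j).det = 0) :
    ∃ c : ι → ℚ, c ≠ 0 ∧ ∀ x ∈ S, ∑ j, c j * (ev x j : ℚ) = 0 := by
  set evQ : P → ι → ℚ := fun x j => (ev x j : ℚ)
  by_cases hV : ⊤ ≤ Submodule.span ℚ (evQ '' S)
  · exfalso
    let b := Module.Basis.ofSpan hV
    have : Fintype ((linearIndepOn_empty ℚ id).extend (Set.empty_subset (evQ '' S))) :=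
      FiniteDimensional.fintypeBasisIndex b
    have hcard := Module.finrank_eq_card_basis b
    rw [Module.finrank_fintype_fun_eq_card] at hcard
    let e := Fintype.equivOfCardEq hcard
    let b' := b.reindex e.symm
    have hb' : ∀ i, ∃ x ∈ S, evQ x = b' i := by
      intro i
      exact Module.Basis.ofSpan_subset hV ⟨e i, by simp [b', b]⟩
    choose x hx hxb using hb'
    have h1 := h x hx
    have h2 : (Matrix.of fun i j => evQ (x i) j).det ≠ 0 := by
      have hli := b'.linearIndependent
      have : (fun i => evQ (x i)) = b' := funext hxb
      rw [← this] at hli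
      have hu := Matrix.linearIndependent_rows_iff_isUnit.1
        (show LinearIndependent ℚ (Matrix.of fun i j => evQ (x i) j).row from hli)
      exact ((Matrix.isUnit_iff_isUnit_det _).1 hu).ne_zero
    apply h2
    rw [← Matrix.det_transpose]
    have h3 := congrArg (Int.castRingHom ℚ) h1
    rw [RingHom.map_det, map_zero] at h3
    convert h3 using 2
    ext i j
    simp [evQ]
  · obtain ⟨f, hf, hfV⟩ := Submodule.exists_le_ker_of_lt_top _ (lt_top_iff_ne_top.2
      (fun h => hV h.ge))
    have hfs : ∀ y : ι → ℚ, f y = ∑ j, f (Pi.single j 1) * y j := by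
      intro y
      conv_lhs => rw [← Finset.univ_sum_single y]
      rw [map_sum]
      refine Finset.sum_congr rfl fun j _ => ?_
      have : Pi.single j (y j) = y j • (Pi.single j 1 : ι → ℚ) := by
        rw [← Pi.single_smul, smul_eq_mul, mul_one]
      rw [this, map_smul, smul_eq_mul, mul_comm]
    refine ⟨fun j => f (Pi.single j 1), ?_, ?_⟩
    · intro h0
      apply hf
      ext1 j
      exact congrFun h0 j |> fun h => by
        ext; simpa using h
    · intro x hx
      rw [← hfs (evQ x)]
      exact hfV (Submodule.subset_span ⟨x, hx, rfl⟩)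

lemma det_bound {ι : Type*} [Fintype ι] [DecidableEq ι] (M : Matrix ι ι ℤ) (B : ℝ)
    (e : ι → ℕ) (h : ∀ j i, |(M j i : ℝ)| ≤ B ^ e j) :
    |(M.det : ℝ)| ≤ (Fintype.card ι).factorial * B ^ (∑ j, e j) := by
  rw [← Matrix.det_transpose, Matrix.det_apply']
  push_cast
  refine (Finset.abs_sum_le_sum_abs _ _).trans ?_
  refine (Finset.sum_le_card_nsmul _ _ (B ^ (∑ j, e j)) ?_).trans ?_
  · intro σ _
    rw [abs_mul, Finset.abs_prod]
    have : |((Equiv.Perm.sign σ : ℤ) : ℝ)| = 1 := by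
      rcases Int.units_eq_one_or (Equiv.Perm.sign σ) with h | h <;> simp [h]
    rw [this, one_mul, ← Finset.prod_pow_eq_pow_sum]
    refine Finset.prod_le_prod (fun _ _ => abs_nonneg _) fun i _ => ?_
    exact h _ _
  · rw [Finset.card_univ, Fintype.card_perm, nsmul_eq_mul]

lemma prime_dvd_det {r d μ : ℕ} (p : ℕ) (hp : p.Prime) {F : MvPolynomial (Fin (r+1+1)) ℤ}
    (hF : F.IsHomogeneous d) (v : Fin (r+1+1) → ZMod p) (hv : v 0 ≠ 0)
    (hμ : homogeneousComponent μ
      (bind₁ (fun i => C (v i) + X i) (MvPolynomial.map (Int.castRingHom (ZMod p)) F)) ≠ 0)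
    {ι : Type*} [Fintype ι] [DecidableEq ι] (x : ι → Fin (r+1+1) → ℤ)
    (hx0 : ∀ i, x i 0 = 1) (hxF : ∀ i, eval (x i) F = 0) (hxp : ∀ i, ReducesTo p (x i) v)
    (h : ι → MvPolynomial (Fin (r+1)) ℤ) (K : ℕ) :
    (p : ℤ) ^ (∑ k ∈ Finset.Icc 1 K, (Fintype.card ι - hh r μ k)) ∣
      (Matrix.of fun j i => eval (Fin.tail (x i)) (h j)).det := by
  classical
  have : Fact p.Prime := ⟨hp⟩
  let a : Fin (r+1) → ℤ := fun j => ((v j.succ / v 0).val : ℤ)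
  have ha : ∀ j, (a j : ZMod p) * v 0 = v j.succ := by
    intro j
    simp only [a, Int.cast_natCast, ZMod.natCast_zmod_val]
    exact div_mul_cancel₀ _ hv
  obtain ⟨l, hlμ, hl, hlt⟩ := exists_local_lead p hp hF v hv hμ a ha
  set g := aeval (Fin.cons 1 (fun j => X j + C (a j)) : Fin (r+1+1) → MvPolynomial (Fin (r+1)) ℤ) F
    with hg
  -- evaluation at z = x - a
  let φ : MvPolynomial (Fin (r+1)) ℤ →ₗ[ℤ] (ι → ℤ) :=
    LinearMap.pi fun i => (aeval (fun j => x i j.succ - a j) :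
      MvPolynomial (Fin (r+1)) ℤ →ₐ[ℤ] ℤ).toLinearMap
  have hφ : ∀ q i, φ q i = aeval (fun j => x i j.succ - a j) q := fun q i => rfl
  have hpx : ∀ i j, (p:ℤ) ∣ x i j.succ - a j := by
    intro i j
    obtain ⟨c, hc, hcx⟩ := hxp i
    have h0 := congrFun hcx 0
    have hj := congrFun hcx j.succ
    simp only [Pi.smul_apply, smul_eq_mul, hx0, Int.cast_one] at h0 hj
    rw [← ZMod.intCast_zmod_eq_zero_iff_dvd]
    push_cast
    rw [hj, ← ha j, sub_eq_zero]
    calc c * (a j * v 0) = (c * v 0) * a j := by ring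
      _ = _ := by rw [← h0, one_mul]
  have hφg : ∀ q, φ (q * g) = 0 := by
    intro q
    ext i
    rw [hφ, map_mul]
    have : aeval (fun j => x i j.succ - a j) g = eval (x i) F := by
      rw [hg, ← AlgHom.comp_apply, ← coe_aeval_eq_eval]
      have : ((aeval (fun j => x i j.succ - a j)).comp (aeval (Fin.cons 1 (fun j => X j + C (a j)) :
        Fin (r+1+1) → MvPolynomial (Fin (r+1)) ℤ))) = (aeval (x i) :
          MvPolynomial (Fin (r+1+1)) ℤ →ₐ[ℤ] ℤ) := by
        ext1 m
        refine Fin.cases ?_ (fun j => ?_) m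
        · simp [hx0]
        · simp
      rw [this]; rfl
    rw [this, hxF, mul_zero]; rfl
  have hφm : ∀ (b : Fin (r+1) →₀ ℕ) i, (p : ℤ) ^ b.degree ∣ φ (monomial b 1) i := by
    intro b i
    rw [hφ, aeval_monomial, map_one, one_mul, Finsupp.prod_fintype _ _ (by simp),
      Finsupp.degree_eq_sum, ← Finset.prod_pow_eq_pow_sum]
    exact Finset.prod_dvd_prod_of_dvd _ _ fun j _ => pow_dvd_pow_of_dvd (hpx i j) _
  have hspan := local_span p hp g l hl hlt φ hφg hφm K
  refine det_dvd_of_span (p:ℤ) (Sum.elim (fun b : EE l K => b.1.degree) (fun _ : ι => K))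
    (Sum.elim (fun a : EE l K => φ (monomial a.1 1))
      (fun i : ι => Pi.single i ((p : ℤ) ^ K))) ?_ _ ?_ _ ?_
  · rintro (b | i') i
    · exact hφm b.1 i
    · simp only [Sum.elim_inr]
      by_cases hi : i = i'
      · subst hi; simp
      · simp [hi]
  · intro j
    have := hspan (aeval (fun m => X m + C (a m)) (h j))
    convert this using 1
    ext i
    rw [hφ, ← AlgHom.comp_apply, Matrix.of_apply, ← coe_aeval_eq_eval]
    have : ((aeval (fun j => x i j.succ - a j)).comp (aeval (fun m => X m + C (a m)) :
        MvPolynomial (Fin (r+1)) ℤ →ₐ[ℤ] MvPolynomial (Fin (r+1)) ℤ)) = (aeval (Fin.tail (x i)) :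
          MvPolynomial (Fin (r+1)) ℤ →ₐ[ℤ] ℤ) := by
      ext1 m
      simp [Fin.tail]
    rw [this]; rfl
  · intro f hf
    refine sum_ge_layer _ K _ fun k hk => ?_
    rw [Finset.mem_Icc] at hk
    refine le_trans ?_ (hh_mono hlμ)
    rw [← card_EE]
    refine Finset.card_le_card_of_injOn (fun j => Sum.elim (fun b : EE l K => b.1) (fun _ => 0) (f j))
      ?_ ?_
    · intro j hj
      simp only [Finset.coe_filter, Finset.mem_univ, true_and, Set.mem_ofPred_eq] at hj
      rcases hfj : f j with b | i'
      · rw [hfj] at hj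
        simp only [Sum.elim_inl] at hj
        simp only [hfj, Sum.elim_inl, Finset.mem_coe]
        exact mem_EE.2 ⟨hj, (mem_EE.1 b.2).2⟩
      · rw [hfj] at hj
        simp only [Sum.elim_inr] at hj
        omega
    · intro j hj j' hj' hjj
      simp only [Finset.coe_filter, Finset.mem_univ, true_and, Set.mem_ofPred_eq] at hj hj'
      apply hf
      rcases hfj : f j with b | i' <;> rcases hfj' : f j' with b' | i'' <;>
        simp only [hfj, hfj', Sum.elim_inl, Sum.elim_inr] at hj hj' hjj
      · rw [Subtype.ext hjj]
      · omega
      · omega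
      · omega


theorem stmt_10 (n d : ℕ) (hn : 2 ≤ n) (hd : 1 ≤ d) (ε : ℝ) (hε : 0 < ε) :
    ∃ C : ℕ, ∀ F : MvPolynomial (Fin (n + 1)) ℤ,
      (∀ c : ℤ, (∀ m, c ∣ F.coeff m) → IsUnit c) →
      F.IsHomogeneous d →
      Irreducible (MvPolynomial.map (Int.castRingHom ℚ) F) →
      ¬ (X 0 ∣ F) →
      ∀ B : ℝ, 1 ≤ B →
      ∀ t : ℕ, ∀ p : Fin t → ℕ, (∀ i, (p i).Prime) → Function.Injective p →
      ∀ v : (i : Fin t) → Fin (n + 1) → ZMod (p i), (∀ i, v i ≠ 0) → (∀ i, v i 0 ≠ 0) →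
      ∀ μ : Fin t → ℕ, (∀ i, 1 ≤ μ i) → (∀ i, MultiplicityAt (p i) F (v i) (μ i)) →
      (∏ i, (p i : ℝ) ^ (((d : ℝ) / μ i) ^ ((1 : ℝ) / ((n : ℝ) - 1))) ≥ B ^ (1 + ε)) →
      ∃ G : MvPolynomial (Fin (n + 1)) ℚ, ∃ e ≤ C, G.IsHomogeneous e ∧
        ¬ (MvPolynomial.map (Int.castRingHom ℚ) F ∣ G) ∧
        ∀ ξ : Fin (n + 1) → ℤ, ξ 0 = 1 →
          (∀ m, m ≠ 0 → (|ξ m| : ℝ) ≤ B) → eval ξ F = 0 →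
          (∀ i, ReducesTo (p i) ξ (v i)) →
          eval (fun m => (ξ m : ℚ)) G = 0 := by
  obtain ⟨r, rfl⟩ : ∃ r, n = r + 1 := ⟨n - 1, by omega⟩
  have hr : 1 ≤ r := by omega
  obtain ⟨D, hD3, Y, K, hK, hfin⟩ := numeric r d hr hd ε hε
  refine ⟨D, ?_⟩
  intro F _ hF _ hX0 B hB t p hp hpinj v _ hv0 μ hμ1 hmult hprod
  have hexp : ((1 : ℝ) / (((r + 1 : ℕ) : ℝ) - 1)) = 1 / r := by push_cast; ring
  rw [hexp] at hprod
  obtain ⟨hf0, hlead⟩ := exists_lead hF hX0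
  set fQ := deh (MvPolynomial.map (Int.castRingHom ℚ) F) with hfQ
  set l := MonomialOrder.degLex.degree fQ with hl
  have hcardE : Fintype.card (EE l (D+1)) = hh r d (D+1) := by
    rw [Fintype.card_coe, card_EE, hlead]
  let S : Set (Fin (r+1+1) → ℤ) := {ξ | ξ 0 = 1 ∧ (∀ m, m ≠ 0 → (|ξ m| : ℝ) ≤ B) ∧
    eval ξ F = 0 ∧ ∀ i, ReducesTo (p i) ξ (v i)}
  have hdet : ∀ x : EE l (D+1) → (Fin (r+1+1) → ℤ), (∀ i, x i ∈ S) →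
      (Matrix.of fun (j i : EE l (D+1)) =>
        eval (Fin.tail (x i)) (monomial j.1 (1:ℤ))).det = 0 := by
    intro x hx
    by_contra hne
    set M : Matrix (EE l (D+1)) (EE l (D+1)) ℤ := Matrix.of fun (j i : EE l (D+1)) =>
        eval (Fin.tail (x i)) (monomial j.1 (1:ℤ)) with hM
    have hℓ : 0 ≤ Real.log B := Real.log_nonneg hB
    rcases Nat.eq_zero_or_pos t with ht | ht
    · subst ht
      simp only [Finset.univ_eq_empty, Finset.prod_empty, ge_iff_le] at hprod
      have hB1 : B ≤ 1 := by
        by_contra hlt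
        push Not at hlt
        exact absurd hprod (not_le.2 (Real.one_lt_rpow hlt (by linarith)))
      obtain ⟨i, -, j, -, hij, he⟩ := Finset.exists_ne_map_eq_of_card_lt_of_maps_to
        (s := (Finset.univ : Finset (EE l (D+1))))
        (t := Fintype.piFinset (fun _ : Fin (r+1) => Finset.Icc (-1:ℤ) 1))
        (f := fun i => Fin.tail (x i)) (by
          rw [Fintype.card_piFinset_const, Finset.card_univ, hcardE]
          simpa using hD3) (by
          intro i _
          simp only [Finset.mem_coe, Fintype.mem_piFinset, Finset.mem_Icc]
          intro m
          have := ((hx i).2.1 m.succ (Fin.succ_ne_zero m)).trans hB1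
          rw [← abs_le]
          exact_mod_cast this)
      exact hne (Matrix.det_zero_of_column_eq hij fun k => by simp only [hM, Matrix.of_apply, he])
    · have hμd : ∀ i, μ i ≤ d := fun i => by
        have : Fact (p i).Prime := ⟨hp i⟩
        exact mult_le (hF.map _) (v i) (hmult i).2
      let A : Fin t → ℕ := fun i =>
        ∑ k ∈ Finset.Icc 1 (K (μ i)), (hh r d (D+1) - hh r (μ i) k)
      have hdvd : ∀ i, ((p i : ℤ)) ^ A i ∣ M.det := by
        intro i
        have := prime_dvd_det (p i) (hp i) hF (v i) (hv0 i) (hmult i).2 x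
          (fun j => (hx j).1) (fun j => (hx j).2.2.1) (fun j => (hx j).2.2.2 i)
          (fun j => monomial j.1 (1:ℤ)) (K (μ i))
        rwa [hcardE] at this
      have hdvd2 : ∏ i, ((p i : ℤ)) ^ A i ∣ M.det := by
        refine Finset.prod_dvd_of_coprime ?_ fun i _ => hdvd i
        intro i _ j _ hij
        refine IsCoprime.pow ?_
        rw [Nat.isCoprime_iff_coprime]
        exact (Nat.coprime_primes (hp i) (hp j)).2 fun h => hij (hpinj h)
      have hle : (∏ i, ((p i : ℝ)) ^ A i) ≤ |(M.det : ℝ)| := by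
        have := Int.le_of_dvd (abs_pos.2 hne) ((dvd_abs _ _).2 hdvd2)
        exact_mod_cast this
      have hub := det_bound M B (fun j => j.1.degree) (by
        intro j i
        rw [hM, Matrix.of_apply, eval_monomial, one_mul, Finsupp.prod_fintype _ _ (by simp),
          Finsupp.degree_eq_sum, ← Finset.prod_pow_eq_pow_sum]
        push_cast
        rw [Finset.abs_prod]
        refine Finset.prod_le_prod (fun _ _ => abs_nonneg _) fun m _ => ?_
        rw [abs_pow]
        refine pow_le_pow_left₀ (abs_nonneg _) ?_ _
        exact (hx i).2.1 m.succ (Fin.succ_ne_zero m))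
      have hsum : ((∑ j : EE l (D+1), j.1.degree : ℕ) : ℝ) =
          D * hh r d (D+1) - (∑ k ∈ Finset.Icc 1 D, hh r d k : ℕ) := by
        have := sum_degree_EE (D := D) l
        rw [hlead] at this
        rw [← this, Finset.sum_coe_sort (EE l (D+1)) (fun a => a.degree)]
      have hpp : ∀ i, (0:ℝ) < p i := fun i => by exact_mod_cast (hp i).pos
      have hlog := Real.log_le_log (Finset.prod_pos fun i _ => pow_pos (hpp i) _) (hle.trans hub)
      rw [Real.log_prod (fun i _ => (pow_pos (hpp i) _).ne'),
        Real.log_mul (by positivity) (by positivity), Real.log_pow, hsum, hcardE] at hlog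
      simp only [Real.log_pow] at hlog
      let W : ℝ := ∑ i, ((d:ℝ) / μ i) ^ ((1:ℝ) / r) * Real.log (p i)
      have hlogp : ∀ i, 0 ≤ Real.log (p i) := fun i => Real.log_natCast_nonneg _
      have hW1 : (1 + ε) * Real.log B ≤ W := by
        have h1 := Real.log_le_log (by positivity) hprod
        rw [Real.log_rpow (by linarith),
          Real.log_prod (fun i _ => (Real.rpow_pos_of_pos (hpp i) _).ne')] at h1
        refine h1.trans (le_of_eq (Finset.sum_congr rfl fun i _ => ?_))
        rw [Real.log_rpow (hpp i)]
      have hW2 : Real.log 2 ≤ W := by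
        have h1 : ((d:ℝ) / μ ⟨0, ht⟩) ^ ((1:ℝ) / r) * Real.log (p ⟨0, ht⟩) ≤ W :=
          Finset.single_le_sum (f := fun i => ((d:ℝ) / μ i) ^ ((1:ℝ) / r) * Real.log (p i))
            (fun i _ => mul_nonneg (by positivity) (hlogp i)) (Finset.mem_univ _)
        refine le_trans ?_ h1
        have h2 : Real.log 2 ≤ Real.log (p ⟨0, ht⟩) := by
          refine Real.log_le_log (by norm_num) ?_
          exact_mod_cast (hp _).two_le
        have h3 : (1:ℝ) ≤ ((d:ℝ) / μ ⟨0, ht⟩) ^ ((1:ℝ) / r) := by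
          refine Real.one_le_rpow ?_ (by positivity)
          have : (0:ℝ) < μ ⟨0, ht⟩ := by exact_mod_cast (hμ1 _)
          rw [one_le_div this]
          exact_mod_cast hμd _
        calc Real.log 2 ≤ Real.log (p ⟨0, ht⟩) := h2
          _ = 1 * Real.log (p ⟨0, ht⟩) := (one_mul _).symm
          _ ≤ _ := mul_le_mul_of_nonneg_right h3 (hlogp _)
      have hfinal := hfin W (Real.log B) hℓ hW2 hW1
      have hYW : Y * W ≤ ∑ i, (A i : ℝ) * Real.log (p i) := by
        rw [Finset.mul_sum]
        refine Finset.sum_le_sum fun i _ => ?_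
        have := mul_le_mul_of_nonneg_right
          (hK (μ i) (Finset.mem_Icc.2 ⟨hμ1 i, hμd i⟩)) (hlogp i)
        refine le_trans (le_of_eq ?_) this
        ring
      linarith
  obtain ⟨c, hc0, hc⟩ := exists_rel S
    (fun ξ (j : EE l (D+1)) => eval (Fin.tail ξ) (monomial j.1 (1:ℤ))) hdet
  have hdeg : ∀ j : EE l (D+1), j.1.degree ≤ D := fun j => by
    have := (mem_EE.1 j.2).1; omega
  refine ⟨∑ j : EE l (D+1), monomial (Finsupp.cons (D - j.1.degree) j.1) (c j), D, le_rfl,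
    ?_, ?_, ?_⟩
  · refine IsHomogeneous.sum _ _ _ fun j _ => isHomogeneous_monomial _ ?_
    rw [degree_succ, Finsupp.cons_zero, Finsupp.tail_cons]
    have := hdeg j
    omega
  · rintro ⟨q, hq⟩
    have h1 := congrArg deh hq
    rw [map_mul, map_sum] at h1
    simp only [deh_monomial, Finsupp.tail_cons] at h1
    rw [← hfQ] at h1
    set G := ∑ j : EE l (D+1), monomial j.1 (c j) with hG
    have hcoeff : ∀ j : EE l (D+1), coeff j.1 G = c j := by
      classical
      intro j
      rw [hG, coeff_sum]
      simp only [coeff_monomial]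
      rw [Finset.sum_eq_single_of_mem j (Finset.mem_univ _), if_pos rfl]
      intro b _ hb
      rw [if_neg fun h => hb (Subtype.ext h)]
    have hG0 : G ≠ 0 := by
      intro h0
      apply hc0
      ext j
      rw [← hcoeff j, h0]; simp
    have hq0 : deh q ≠ 0 := by
      intro h0; rw [h0, mul_zero] at h1; exact hG0 h1
    have hdg : MonomialOrder.degLex.degree G = l + MonomialOrder.degLex.degree (deh q) := by
      rw [h1, MonomialOrder.degree_mul hf0 hq0]
    have hmem := MonomialOrder.degLex.degree_mem_support hG0
    have hsub : ∀ b ∈ G.support, b ∈ EE l (D+1) := by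
      classical
      intro b hb
      by_contra hbE
      rw [mem_support_iff] at hb
      apply hb
      rw [hG, coeff_sum]
      refine Finset.sum_eq_zero fun j _ => ?_
      rw [coeff_monomial, if_neg]
      rintro rfl
      exact hbE j.2
    have := (mem_EE.1 (hsub _ hmem)).2
    apply this
    rw [hdg]
    exact le_self_add
  · intro ξ h0 hb hev hred
    have := hc ξ ⟨h0, hb, hev, hred⟩
    rw [map_sum, ← this]
    refine Finset.sum_congr rfl fun j _ => ?_
    rw [eval_monomial, eval_monomial, Finsupp.prod_fintype _ _ (by simp),
      Finsupp.prod_fintype _ _ (by simp), Fin.prod_univ_succ]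
    simp [h0, Fin.tail]
end

section
/- Let d ≥ 1 and ε > 0. There exists a constant C = C(d,ε) with the following property. Let F ∈ ℤ[x_0,x_1,x_2,x_3] be a primitive homogeneous polynomial of degree d which is irreducible over ℚ and not divisible by x_0, defining the integral surface X = {F = 0} ⊂ P^3. Let B ≥ 1 be real, let p be a prime with p ≥ B^{1/√d + ε}, and let P ∈ P^3(𝔽_p) be a point with F(P) ≡ 0 (mod p) at which some partial derivative of F is nonzero mod p (a non-singular 𝔽_p-point of the reduction X_p). Then there exists a homogeneous polynomial G ∈ ℚ[x_0,x_1,x_2,x_3] of degree at most C which is not divisible by F and which vanishes at every rational point of X representable by an integer tuple (1,x_1,x_2,x_3) with |x_m| ≤ B for 1 ≤ m ≤ 3 whose reduction mod p equals P. -/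
open MvPolynomial

namespace S11

lemma taylor2 {σ : Type*} [DecidableEq σ] (i : σ) (ξ : σ → ℤ) (h : ℤ) (F : MvPolynomial σ ℤ) :
    ∃ k : ℤ, eval (Function.update ξ i (ξ i + h)) F
      = eval ξ F + h * eval ξ (pderiv i F) + k * h ^ 2 := by
  induction F using MvPolynomial.induction_on with
  | C a => exact ⟨0, by simp⟩
  | add f g hf hg =>
    obtain ⟨k, hk⟩ := hf
    obtain ⟨l, hl⟩ := hg
    refine ⟨k + l, ?_⟩
    simp only [map_add, hk, hl]
    ring
  | mul_X f j hf =>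
    obtain ⟨k, hk⟩ := hf
    by_cases hj : j = i
    · subst hj
      refine ⟨eval ξ (pderiv j f) + k * ξ j + k * h, ?_⟩
      simp only [map_mul, hk, eval_X, Function.update_self, Derivation.leibniz, pderiv_X_self,
        smul_eq_mul, map_add, map_one]
      ring
    · refine ⟨k * ξ j, ?_⟩
      simp only [map_mul, hk, eval_X, Function.update_of_ne hj, Derivation.leibniz,
        pderiv_X_of_ne hj, smul_eq_mul, map_add, map_zero]
      ring

lemma eval_congr_mod {σ : Type*} (m : ℤ) (x y : σ → ℤ) (h : ∀ i, m ∣ x i - y i)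
    (g : MvPolynomial σ ℤ) : m ∣ eval x g - eval y g := by
  induction g using MvPolynomial.induction_on with
  | C a => simp
  | add f g hf hg =>
    simp only [map_add]
    rw [add_sub_add_comm]
    exact dvd_add hf hg
  | mul_X f j hf =>
    simp only [map_mul, eval_X]
    have := dvd_add (hf.mul_right (x j)) ((h j).mul_left (eval y f))
    have e : eval x f * x j - eval y f * y j
      = (eval x f - eval y f) * x j + eval y f * (x j - y j) := by ring
    rw [e]
    exact this

/-- base substitution -/
noncomputable def bs (ξ₀ : Fin 4 → ℤ) (j k : Fin 4) : Fin 4 → MvPolynomial (Fin 2) ℤ :=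
  fun l => C (ξ₀ l) + (if l = j then X 0 else if l = k then X 1 else 0)

lemma eval_bs (ξ₀ ξ : Fin 4 → ℤ) (j k i : Fin 4) (h0 : ξ 0 = ξ₀ 0) (hjk : j ≠ k)
    (hall : ∀ l, l = 0 ∨ l = i ∨ l = j ∨ l = k) (l : Fin 4) (hl : l ≠ i) :
    eval ![ξ j - ξ₀ j, ξ k - ξ₀ k] (bs ξ₀ j k l) = ξ l := by
  unfold bs
  rcases hall l with h | h | h | h
  · subst h
    by_cases h1 : 0 = j
    · subst h1; simp
    · by_cases h2 : 0 = k
      · subst h2; simp [h1]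
      · simp [h1, h2, h0]
  · exact absurd h hl
  · subst h; simp
  · subst h; simp [hjk.symm]

lemma eval_upd (ξ₀ ξ : Fin 4 → ℤ) (j k i : Fin 4) (h0 : ξ 0 = ξ₀ 0) (hjk : j ≠ k)
    (hall : ∀ l, l = 0 ∨ l = i ∨ l = j ∨ l = k) (Ψ : MvPolynomial (Fin 2) ℤ)
    (g : MvPolynomial (Fin 4) ℤ) :
    eval ![ξ j - ξ₀ j, ξ k - ξ₀ k] (aeval (Function.update (bs ξ₀ j k) i Ψ) g)
      = eval (Function.update ξ i (eval ![ξ j - ξ₀ j, ξ k - ξ₀ k] Ψ)) g := by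
  have key : (fun l => eval ![ξ j - ξ₀ j, ξ k - ξ₀ k] (Function.update (bs ξ₀ j k) i Ψ l))
      = Function.update ξ i (eval ![ξ j - ξ₀ j, ξ k - ξ₀ k] Ψ) := by
    funext l
    by_cases hl : l = i
    · subst hl; simp
    · rw [Function.update_of_ne hl, Function.update_of_ne hl]
      exact eval_bs ξ₀ ξ j k i h0 hjk hall l hl
  rw [← key]
  induction g using MvPolynomial.induction_on with
  | C a => simp
  | add f g hf hg => simp only [map_add, hf, hg]
  | mul_X f j hf => simp only [map_mul, hf, aeval_X, eval_X]

lemma hensel (F : MvPolynomial (Fin 4) ℤ) (p : ℕ) (hp : p.Prime) (ξ₀ : Fin 4 → ℤ)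
    (i j k : Fin 4) (hjk : j ≠ k)
    (hall : ∀ l, l = 0 ∨ l = i ∨ l = j ∨ l = k)
    (hD : ¬ (p : ℤ) ∣ eval ξ₀ (pderiv i F)) (n : ℕ) :
    ∃ Ψ : MvPolynomial (Fin 2) ℤ, ∀ ξ : Fin 4 → ℤ, ξ 0 = ξ₀ 0 → (∀ l, (p : ℤ) ∣ ξ l - ξ₀ l) →
      eval ξ F = 0 →
      (p : ℤ) ^ (n + 1) ∣ eval ![ξ j - ξ₀ j, ξ k - ξ₀ k] Ψ - ξ i := by
  induction n with
  | zero =>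
    refine ⟨C (ξ₀ i), fun ξ _ h _ => ?_⟩
    have := h i
    rw [← dvd_neg] at this
    simpa using this
  | succ n ih =>
    obtain ⟨Ψ, hΨ⟩ := ih
    have hcop : IsCoprime (eval ξ₀ (pderiv i F)) (p : ℤ) :=
      ((Nat.prime_iff_prime_int.mp hp).irreducible.coprime_iff_not_dvd.mpr hD).symm
    obtain ⟨u, w, huw⟩ := hcop
    refine ⟨Ψ - C u * aeval (Function.update (bs ξ₀ j k) i Ψ) F, fun ξ h0 h hF => ?_⟩
    have h1 := hΨ ξ h0 h hF
    rw [map_sub, map_mul, eval_C, eval_upd ξ₀ ξ j k i h0 hjk hall]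
    set e := eval ![ξ j - ξ₀ j, ξ k - ξ₀ k] Ψ
    obtain ⟨q, hq⟩ := taylor2 i ξ (e - ξ i) F
    rw [add_sub_cancel, hF] at hq
    rw [hq]
    obtain ⟨a, ha⟩ := h1
    obtain ⟨b, hb⟩ := eval_congr_mod (p : ℤ) ξ ξ₀ h (pderiv i F)
    have hD' : eval ξ (pderiv i F) = eval ξ₀ (pderiv i F) + p * b := by linarith
    have huw' : u * eval ξ₀ (pderiv i F) = 1 - w * p := by linarith
    have : e - u * (0 + (e - ξ i) * eval ξ (pderiv i F) + q * (e - ξ i) ^ 2) - ξ i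
        = (e - ξ i) * (1 - u * eval ξ₀ (pderiv i F) - u * p * b - u * q * (e - ξ i)) := by
      rw [hD']; ring
    rw [this, huw', ha]
    refine ⟨a * (w - u * b - u * q * p ^ n * a), ?_⟩
    ring

/-- index type of monomials of degree `< n` in two variables -/
abbrev J (n : ℕ) := Σ k : Fin n, Fin (k.val + 1)

lemma expand (n : ℕ) (p : ℤ) (h : MvPolynomial (Fin 2) ℤ) :
    ∃ c : J n → ℤ, ∀ y : Fin 2 → ℤ, ∃ r : ℤ, eval (fun i => p * y i) h
      = ∑ a : J n, (p ^ a.1.val * (y 0 ^ a.2.val * y 1 ^ (a.1.val - a.2.val))) * c a + p ^ n * r := by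
  induction h using MvPolynomial.induction_on' with
  | monomial m b =>
    by_cases hm : m 0 + m 1 < n
    · refine ⟨Pi.single ⟨⟨m 0 + m 1, hm⟩, ⟨m 0, by simp⟩⟩ b, fun y => ⟨0, ?_⟩⟩
      rw [Finset.sum_eq_single ⟨⟨m 0 + m 1, hm⟩, ⟨m 0, by simp⟩⟩]
      · simp only [eval_monomial, Pi.single_eq_same]
        rw [Finsupp.prod_fintype _ _ (by simp)]
        simp [Fin.prod_univ_two]
        ring
      · intro a _ ha
        rw [Pi.single_eq_of_ne ha]; simp
      · simp
    · refine ⟨0, fun y => ⟨b * p ^ (m 0 + m 1 - n) * y 0 ^ m 0 * y 1 ^ m 1, ?_⟩⟩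
      simp only [eval_monomial]
      rw [Finsupp.prod_fintype _ _ (by simp)]
      have : p ^ (m 0) * p ^ (m 1) = p ^ n * p ^ (m 0 + m 1 - n) := by
        rw [← pow_add, ← pow_add]; congr 1; omega
      simp [Fin.prod_univ_two]
      rw [mul_pow, mul_pow]
      linear_combination (b * y 0 ^ m 0 * y 1 ^ m 1) * this
  | add f g hf hg =>
    obtain ⟨c, hc⟩ := hf
    obtain ⟨c', hc'⟩ := hg
    refine ⟨c + c', fun y => ?_⟩
    obtain ⟨r, hr⟩ := hc y
    obtain ⟨r', hr'⟩ := hc' y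
    refine ⟨r + r', ?_⟩
    rw [map_add, hr, hr']
    simp only [Pi.add_apply, mul_add, Finset.sum_add_distrib]
    ring

lemma local_exp (F : MvPolynomial (Fin 4) ℤ) (p : ℕ) (hp : p.Prime) (ξ₀ : Fin 4 → ℤ)
    (i j k : Fin 4) (hjk : j ≠ k)
    (hall : ∀ l, l = 0 ∨ l = i ∨ l = j ∨ l = k)
    (hD : ¬ (p : ℤ) ∣ eval ξ₀ (pderiv i F)) (n : ℕ) (g : MvPolynomial (Fin 4) ℤ) :
    ∃ c : J n → ℤ, ∀ ξ : Fin 4 → ℤ, ξ 0 = ξ₀ 0 → (∀ l, (p : ℤ) ∣ ξ l - ξ₀ l) →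
      eval ξ F = 0 → ∃ r : ℤ, eval ξ g
      = ∑ a : J n, ((p : ℤ) ^ a.1.val * (((ξ j - ξ₀ j) / p) ^ a.2.val *
          ((ξ k - ξ₀ k) / p) ^ (a.1.val - a.2.val))) * c a + (p : ℤ) ^ n * r := by
  obtain ⟨Ψ, hΨ⟩ := hensel F p hp ξ₀ i j k hjk hall hD n
  obtain ⟨c, hc⟩ := expand n p (aeval (Function.update (bs ξ₀ j k) i Ψ) g)
  refine ⟨c, fun ξ h0 h hF => ?_⟩
  obtain ⟨r, hr⟩ := hc ![(ξ j - ξ₀ j) / p, (ξ k - ξ₀ k) / p]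
  have e1 : (fun i => (p : ℤ) * (![(ξ j - ξ₀ j) / p, (ξ k - ξ₀ k) / p] : Fin 2 → ℤ) i)
      = ![ξ j - ξ₀ j, ξ k - ξ₀ k] := by
    funext i
    fin_cases i
    · exact Int.mul_ediv_cancel' (h j)
    · exact Int.mul_ediv_cancel' (h k)
  rw [e1, eval_upd ξ₀ ξ j k i h0 hjk hall] at hr
  have h2 := hΨ ξ h0 h hF
  have h3 : (p : ℤ) ^ (n + 1) ∣ eval ξ g -
      eval (Function.update ξ i (eval ![ξ j - ξ₀ j, ξ k - ξ₀ k] Ψ)) g := by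
    apply eval_congr_mod
    intro l
    by_cases hl : l = i
    · subst hl; simpa using (dvd_neg.mpr h2)
    · simp [Function.update_of_ne hl]
  obtain ⟨q, hq⟩ := h3
  refine ⟨r + p * q, ?_⟩
  simp only [Matrix.cons_val_zero, Matrix.cons_val_one] at hr
  rw [pow_succ] at hq
  linear_combination hq + hr

lemma det_dvd {ι J : Type*} [Fintype ι] [DecidableEq ι] [Fintype J] [DecidableEq J]
    (p : ℤ) (n : ℕ) (w : J → ℕ) (hw : ∀ j, w j ≤ n) (c : J → ι → ℤ) (u : ι → J → ℤ)
    (r : ι → ι → ℤ) (M : Matrix ι ι ℤ)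
    (hM : ∀ i k, M i k = ∑ j, (p ^ w j * u i j) * c j k + p ^ n * r i k) :
    p ^ (n * Fintype.card ι - ∑ j, (n - w j)) ∣ M.det := by
  let sc : ι → Option J → ℤ := fun i o => o.elim (p ^ n) (fun j => p ^ w j * u i j)
  let bv : ι → Option J → ι → ℤ := fun i o => o.elim (r i) c
  let wo : Option J → ℕ := fun o => o.elim n w
  have hMr : M = fun i => ∑ o : Option J, sc i o • bv i o := by
    ext i k
    rw [hM, Fintype.sum_option]
    simp [sc, bv]
    ring
  have hdet : M.det = ∑ q : ι → Option J, (∏ i, sc i (q i)) *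
      Matrix.det (fun i => bv i (q i)) := by
    rw [hMr]
    have := (Matrix.detRowAlternating (n := ι) (R := ℤ)).toMultilinearMap.map_sum
      (fun i (o : Option J) => sc i o • bv i o)
    refine Eq.trans this ?_
    refine Finset.sum_congr rfl fun q _ => ?_
    exact (Matrix.detRowAlternating (n := ι) (R := ℤ)).toMultilinearMap.map_smul_univ
      (fun i => sc i (q i)) (fun i => bv i (q i))
  rw [hdet]
  refine Finset.dvd_sum fun q _ => ?_
  by_cases hq : ∃ i i', i ≠ i' ∧ q i = q i' ∧ q i ≠ none
  · obtain ⟨i, i', hne, heq, hno⟩ := hq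
    have : Matrix.det (fun i => bv i (q i)) = 0 := by
      apply Matrix.det_zero_of_row_eq hne
      show bv i (q i) = bv i' (q i')
      rw [← heq]
      obtain ⟨j, hj⟩ := Option.ne_none_iff_exists'.mp hno
      rw [hj]; rfl
    rw [this, mul_zero]; exact dvd_zero _
  · push Not at hq
    apply Dvd.dvd.mul_right
    have h1 : p ^ (∑ i, wo (q i)) ∣ ∏ i, sc i (q i) := by
      rw [← Finset.prod_pow_eq_pow_sum]
      apply Finset.prod_dvd_prod_of_dvd
      intro i _
      rcases q i with _ | j
      · exact dvd_rfl
      · exact Dvd.intro _ rfl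
    refine (pow_dvd_pow p ?_).trans h1
    have h2 : ∑ i, (n - wo (q i)) ≤ ∑ j, (n - w j) := by
      have : ∑ j, (n - w j) = ∑ o : Option J, (n - wo o) := by
        rw [Fintype.sum_option]; simp [wo]
      rw [this, ← Finset.sum_fiberwise (s := Finset.univ) (g := q)]
      apply Finset.sum_le_sum
      intro o _
      rcases o with _ | j
      · rw [Finset.sum_eq_zero]
        · simp
        · intro i hi
          simp at hi
          simp [hi, wo]
      · have hc : (Finset.univ.filter (fun i => q i = some j)).card ≤ 1 := by
          rw [Finset.card_le_one]
          intro a ha b hb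
          simp at ha hb
          by_contra hab
          have := hq a b hab (ha.trans hb.symm)
          rw [ha] at this
          simp at this
        calc _ = ∑ i ∈ Finset.univ.filter (fun i => q i = some j), (n - wo (some j)) := by
                apply Finset.sum_congr rfl
                intro i hi
                simp at hi
                rw [hi]
          _ = (Finset.univ.filter (fun i => q i = some j)).card * (n - wo (some j)) := by simp
          _ ≤ 1 * (n - wo (some j)) := Nat.mul_le_mul_right _ hc
          _ = _ := one_mul _
    have h3 : n * Fintype.card ι = ∑ i, (n - wo (q i)) + ∑ i, wo (q i) := by
      rw [← Finset.sum_add_distrib]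
      rw [Finset.sum_congr rfl (g := fun _ => n)]
      · simp [mul_comm]
      · intro i _
        apply Nat.sub_add_cancel
        rcases q i with _ | j
        · exact le_rfl
        · exact hw j
    omega

lemma sumJ (n : ℕ) : 6 * ∑ a : J n, (n - a.1.val) = n * (n + 1) * (n + 2) := by
  rw [Fintype.sum_sigma]
  simp only [Finset.sum_const, Finset.card_univ, Fintype.card_fin, smul_eq_mul]
  rw [Fin.sum_univ_eq_sum_range (fun k => (k + 1) * (n - k))]
  have h : ∀ m ≤ n, (6 : ℤ) * ∑ k ∈ Finset.range m, ((k + 1) * (n - k) : ℤ)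
      = m * (m + 1) * (3 * n - 2 * m + 2) := by
    intro m hm
    induction m with
    | zero => simp
    | succ m ih =>
      rw [Finset.sum_range_succ, mul_add, ih (by omega)]
      push_cast
      ring
  have := h n le_rfl
  zify
  rw [Finset.sum_congr rfl (g := fun k : ℕ => ((k + 1) * (n - k) : ℤ))]
  · rw [this]; ring
  · intro k hk
    rw [Finset.mem_range] at hk
    rw [Nat.cast_sub hk.le]

end S11

namespace S11

/-- monomials of degree `e` -/
noncomputable def allM (e : ℕ) : Finset (Fin 3 →₀ ℕ) := Finset.finsuppAntidiag Finset.univ e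

lemma mem_allM (e : ℕ) (m : Fin 3 →₀ ℕ) : m ∈ allM e ↔ m.degree = e := by
  simp [allM, Finsupp.degree_eq_sum]

lemma card_allM (e : ℕ) : 2 * (allM e).card = (e + 2) * (e + 1) := by
  rw [allM, Finset.card_finsuppAntidiag_nat_eq_choose]
  simp only [Finset.card_univ, Fintype.card_fin]
  have h1 : 3 + e - 1 = e + 2 := by omega
  rw [h1]
  rw [← Nat.choose_symm_of_eq_add (n := e + 2) (a := 2) (b := e) (by omega)]
  have := Nat.triangle_succ (e + 1)
  rw [Nat.choose_two_right]
  have h2 : 2 ∣ (e + 2) * (e + 1) := (Nat.even_mul_pred_self (e + 2)).two_dvd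
  simpa using Nat.mul_div_cancel' h2

/-- monomials of degree `e` not divisible by `a` -/
noncomputable def redM (a : Fin 3 →₀ ℕ) (e : ℕ) : Finset (Fin 3 →₀ ℕ) :=
  (allM e).filter (fun m => ¬ a ≤ m)

lemma card_redM_lt (a : Fin 3 →₀ ℕ) (e : ℕ) (h : e < a.degree) :
    redM a e = allM e := by
  apply Finset.filter_true_of_mem
  intro m hm hle
  rw [mem_allM] at hm
  have := Finsupp.degree_mono hle
  omega

lemma card_redM_ge (a : Fin 3 →₀ ℕ) (e : ℕ) (h : a.degree ≤ e) :
    (redM a e).card + (allM (e - a.degree)).card = (allM e).card := by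
  rw [← Finset.card_filter_add_card_filter_not (s := allM e) (fun m => ¬ a ≤ m)]
  congr 1
  rw [← Finset.card_image_of_injective (allM (e - a.degree)) (add_left_injective a)]
  congr 1
  ext m
  simp only [Finset.mem_image, mem_allM, Finset.mem_filter, not_not]
  constructor
  · rintro ⟨m', h', rfl⟩
    refine ⟨?_, le_add_self⟩
    rw [map_add, h']; omega
  · rintro ⟨h1, h2⟩
    refine ⟨m - a, ?_, tsub_add_cancel_of_le h2⟩
    have := congrArg Finsupp.degree (tsub_add_cancel_of_le h2)
    rw [map_add] at this
    omega

lemma card_redM_bound (a : Fin 3 →₀ ℕ) (e : ℕ) :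
    |((redM a e).card : ℝ) - a.degree * e| ≤ ((a.degree : ℝ) + 2) ^ 2 := by
  set d := a.degree with hd
  rcases lt_or_ge e d with h | h
  · rw [card_redM_lt a e h]
    have h1 : (2 : ℝ) * (allM e).card = (e + 2) * (e + 1) := by exact_mod_cast card_allM e
    have h2 : (e : ℝ) + 1 ≤ d := by exact_mod_cast h
    have h3 : (0 : ℝ) ≤ e := by positivity
    rw [abs_le]
    constructor <;> nlinarith
  · have h0 := card_redM_ge a e h
    have h0' : ((redM a e).card : ℝ) + (allM (e - d)).card = (allM e).card := by exact_mod_cast h0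
    have h1 : (2 : ℝ) * (allM e).card = (e + 2) * (e + 1) := by exact_mod_cast card_allM e
    have h2 : (2 : ℝ) * (allM (e - d)).card = (e - d + 2) * (e - d + 1) := by
      have := card_allM (e - d)
      have h' : (2 : ℝ) * (allM (e - d)).card = ((e - d : ℕ) + 2) * ((e - d : ℕ) + 1) := by
        exact_mod_cast this
      rwa [Nat.cast_sub h] at h'
    have h3 : (0 : ℝ) ≤ d := by positivity
    have h4 : ((redM a e).card : ℝ) = d * e + d * (3 - d) / 2 := by nlinarith
    rw [h4, abs_le]
    constructor <;> nlinarith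

/-- all reduced monomials up to degree `D` -/
noncomputable def MS (a : Fin 3 →₀ ℕ) (D : ℕ) : Finset (Fin 3 →₀ ℕ) :=
  (Finset.range (D + 1)).biUnion (redM a)

lemma mem_MS (a : Fin 3 →₀ ℕ) (D : ℕ) (m : Fin 3 →₀ ℕ) :
    m ∈ MS a D ↔ m.degree ≤ D ∧ ¬ a ≤ m := by
  simp only [MS, redM, Finset.mem_biUnion, Finset.mem_range, Finset.mem_filter, mem_allM]
  constructor
  · rintro ⟨e, h1, h2, h3⟩
    exact ⟨by omega, h3⟩
  · rintro ⟨h1, h2⟩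
    exact ⟨_, by omega, rfl, h2⟩

lemma sum_MS (a : Fin 3 →₀ ℕ) (D : ℕ) (φ : ℕ → ℝ) :
    ∑ m ∈ MS a D, φ m.degree = ∑ e ∈ Finset.range (D + 1), (redM a e).card * φ e := by
  rw [MS, Finset.sum_biUnion]
  · refine Finset.sum_congr rfl fun e _ => ?_
    rw [Finset.sum_congr rfl (g := fun _ => φ e)]
    · simp
    · intro m hm
      simp only [redM, Finset.mem_filter, mem_allM] at hm
      rw [hm.1]
  · intro e _ e' _ hne
    rw [Function.onFun, Finset.disjoint_left]
    intro m hm hm'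
    simp only [redM, Finset.mem_filter, mem_allM] at hm hm'
    exact hne (hm.1.symm.trans hm'.1)

lemma sum1 (D : ℕ) : ∑ e ∈ Finset.range (D + 1), (e : ℝ) = D * (D + 1) / 2 := by
  induction D with
  | zero => simp
  | succ n ih => rw [Finset.sum_range_succ, ih]; push_cast; ring

lemma sum2 (D : ℕ) : ∑ e ∈ Finset.range (D + 1), (e : ℝ) * e = D * (D + 1) * (2 * D + 1) / 6 := by
  induction D with
  | zero => simp
  | succ n ih => rw [Finset.sum_range_succ, ih]; push_cast; ring

lemma MS_bounds (a : Fin 3 →₀ ℕ) (d : ℕ) (ha : a.degree = d) (D : ℕ) :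
    (d : ℝ) * (D * (D + 1) / 2) - ((d : ℝ) + 2) ^ 2 * (D + 1) ≤ ((MS a D).card : ℝ) ∧
    ((MS a D).card : ℝ) ≤ (d : ℝ) * (D * (D + 1) / 2) + ((d : ℝ) + 2) ^ 2 * (D + 1) ∧
    ((∑ m ∈ MS a D, m.degree : ℕ) : ℝ) ≤
      d * (D * (D + 1) * (2 * D + 1) / 6) + ((d : ℝ) + 2) ^ 2 * (D * (D + 1) / 2) := by
  subst ha
  have hb := fun e => abs_le.mp (card_redM_bound a e)
  set c := ((a.degree : ℝ) + 2) ^ 2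
  have h1 : ((MS a D).card : ℝ) = ∑ e ∈ Finset.range (D + 1), ((redM a e).card : ℝ) := by
    have := sum_MS a D (fun _ => 1)
    simpa using this
  have h2 : ((∑ m ∈ MS a D, m.degree : ℕ) : ℝ)
      = ∑ e ∈ Finset.range (D + 1), ((redM a e).card : ℝ) * e := by
    have := sum_MS a D (fun e => (e : ℝ))
    push_cast
    exact this
  refine ⟨?_, ?_, ?_⟩
  · rw [h1, ← sum1]
    have : ∑ e ∈ Finset.range (D + 1), ((a.degree : ℝ) * e - c)
        ≤ ∑ e ∈ Finset.range (D + 1), ((redM a e).card : ℝ) :=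
      Finset.sum_le_sum fun e _ => by linarith [(hb e).1]
    rw [Finset.sum_sub_distrib, ← Finset.mul_sum] at this
    simp at this
    linarith
  · rw [h1, ← sum1]
    have : ∑ e ∈ Finset.range (D + 1), ((redM a e).card : ℝ)
        ≤ ∑ e ∈ Finset.range (D + 1), ((a.degree : ℝ) * e + c) :=
      Finset.sum_le_sum fun e _ => by linarith [(hb e).2]
    rw [Finset.sum_add_distrib, ← Finset.mul_sum] at this
    simp at this
    linarith
  · rw [h2, ← sum1, ← sum2]
    have : ∑ e ∈ Finset.range (D + 1), ((redM a e).card : ℝ) * e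
        ≤ ∑ e ∈ Finset.range (D + 1), ((a.degree : ℝ) * (e * e) + c * e) :=
      Finset.sum_le_sum fun e _ => by
        have := mul_le_mul_of_nonneg_right (sub_le_iff_le_add.mp (hb e).2) (Nat.cast_nonneg e)
        linarith
    rw [Finset.sum_add_distrib, ← Finset.mul_sum, ← Finset.mul_sum] at this
    exact this

lemma ev_log (c κ : ℝ) (hc : 1 ≤ c) (hκ : 0 < κ) :
    ∀ᶠ D : ℕ in Filter.atTop, 4 * c * Real.log (4 * c * D ^ 2) < κ * D := by
  have h1 : ∀ᶠ x : ℝ in Filter.atTop, ‖Real.log x‖ ≤ (κ / (32 * c)) * ‖id x‖ :=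
    Real.isLittleO_log_id_atTop.def (by positivity)
  have h2 := (tendsto_natCast_atTop_atTop (R := ℝ)).eventually h1
  have h3 := (tendsto_natCast_atTop_atTop (R := ℝ)).eventually
    (Filter.eventually_gt_atTop (max 1 (16 * c * Real.log (4 * c) / κ)))
  filter_upwards [h2, h3] with D hD hD'
  have hD1 : (1 : ℝ) < D := lt_of_le_of_lt (le_max_left _ _) hD'
  have hD2 := lt_of_le_of_lt (le_max_right _ _) hD'
  rw [div_lt_iff₀ hκ] at hD2
  have hD0 : (0 : ℝ) < D := by linarith
  rw [Real.log_mul (by positivity) (by positivity), Real.log_pow]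
  have h4 : Real.log D ≤ κ / (32 * c) * D := by
    have := (le_abs_self _).trans hD
    simpa [abs_of_pos hD0] using this
  have h5 : κ / (32 * c) * D * (32 * c) = κ * D := by field_simp
  have h6 : Real.log D * (32 * c) ≤ κ * D := by
    rw [← h5]; exact mul_le_mul_of_nonneg_right h4 (by positivity)
  push_cast
  nlinarith

lemma aux1 (d x c s : ℝ) (hd : 1 ≤ d) (hc : 1 ≤ c) (hx : 1 ≤ x)
    (h : d * (x * (x + 1) / 2) - c * (x + 1) ≤ s) : d * x ^ 2 / 2 - 2 * c * x ≤ s := by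
  have h1 : 0 ≤ d * x := by positivity
  have h2 : 0 ≤ c * (x - 1) := mul_nonneg (by linarith) (by linarith)
  nlinarith

lemma aux2 (d x c s : ℝ) (hd : 1 ≤ d) (hc : d ≤ c) (hx : 1 ≤ x)
    (h : s ≤ d * (x * (x + 1) / 2) + c * (x + 1)) : s ≤ 4 * c * x ^ 2 := by
  have h1 : d * (x * (x + 1) / 2) ≤ c * x ^ 2 :=
    mul_le_mul hc (by nlinarith) (by positivity) (by linarith)
  have h2 : c * (x + 1) ≤ c * (2 * x ^ 2) :=
    mul_le_mul_of_nonneg_left (by nlinarith) (by linarith)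
  have h3 : 0 ≤ c * x ^ 2 := mul_nonneg (by linarith) (by positivity)
  linarith

lemma aux3 (d x c s : ℝ) (hd : 1 ≤ d) (hc : d ≤ c) (hx : 1 ≤ x)
    (h : s ≤ d * (x * (x + 1) * (2 * x + 1) / 6) + c * (x * (x + 1) / 2)) :
    s ≤ d * x ^ 3 / 3 + 2 * c * x ^ 2 := by
  have h1 : d * (3 * x ^ 2 + x) ≤ c * (4 * x ^ 2) :=
    mul_le_mul hc (by nlinarith) (by positivity) (by linarith)
  have h2 : c * (x * (x + 1) / 2) ≤ c * x ^ 2 :=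
    mul_le_mul_of_nonneg_left (by nlinarith) (by linarith)
  have h3 : 0 ≤ c * x ^ 2 := mul_nonneg (by linarith) (by positivity)
  nlinarith

lemma aux4 (r x n : ℝ) (hr : 1 ≤ r) (hx : 1 ≤ x) (hn0 : 0 ≤ n) (hn1 : n ≤ r * x) :
    n * (n + 1) * (n + 2) ≤ r ^ 3 * x ^ 3 + 5 * r ^ 2 * x ^ 2 := by
  have h2 : n ^ 2 ≤ (r * x) ^ 2 := pow_le_pow_left₀ hn0 hn1 2
  have h3 : n ^ 3 ≤ (r * x) ^ 3 := pow_le_pow_left₀ hn0 hn1 3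
  have h5 : 1 ≤ r * x := one_le_mul_of_one_le_of_one_le hr hx
  have h4 : r * x ≤ (r * x) ^ 2 := by nlinarith
  have e1 : n * (n + 1) * (n + 2) = n ^ 3 + 3 * n ^ 2 + 2 * n := by ring
  have e2 : r ^ 3 * x ^ 3 + 5 * r ^ 2 * x ^ 2 = (r * x) ^ 3 + 5 * (r * x) ^ 2 := by ring
  rw [e1, e2]
  linarith

lemma aux5 (r x n s T c : ℝ) (hr : 1 ≤ r) (hx : 1 ≤ x) (hc : 0 ≤ c) (hn0 : 0 ≤ n)
    (hn1 : n ≤ r * x) (hn2 : r * x < n + 1)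
    (hs : r ^ 2 * x ^ 2 / 2 - 2 * c * x ≤ s)
    (hT : T * 6 ≤ r ^ 3 * x ^ 3 + 5 * r ^ 2 * x ^ 2) :
    r ^ 3 * x ^ 3 / 3 - (2 * c * r + 2 * r ^ 2) * x ^ 2 ≤ n * s - T := by
  have h1 : n * (r ^ 2 * x ^ 2 / 2 - 2 * c * x) ≤ n * s :=
    mul_le_mul_of_nonneg_left hs hn0
  have h2 : (r * x - n) * (r ^ 2 * x ^ 2 / 2) ≤ 1 * (r ^ 2 * x ^ 2 / 2) :=
    mul_le_mul_of_nonneg_right (by linarith) (by positivity)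
  have h3 : 0 ≤ (r * x - n) * (2 * c * x) :=
    mul_nonneg (by linarith) (by positivity)
  have h4 : 0 ≤ r ^ 2 * x ^ 2 := by positivity
  linarith

lemma aux6 (r x K N : ℝ) (hD2 : 6 * K ≤ x * r ^ 3)
    (h : r ^ 3 * x ^ 3 / 3 - K * x ^ 2 ≤ N) : r ^ 3 * x ^ 3 / 6 ≤ N := by
  have : 6 * K * x ^ 2 ≤ x * r ^ 3 * x ^ 2 := mul_le_mul_of_nonneg_right hD2 (by positivity)
  linarith

lemma aux7 (r x K N l ε c W : ℝ) (hl : 0 < l) (hε : 0 < ε) (hlr : l * r = 1)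
    (h : r ^ 3 * x ^ 3 / 3 - K * x ^ 2 ≤ N)
    (hD3 : (K * (l + ε / 2) + 2 * c) * 6 ≤ x * (ε * r ^ 3))
    (hW : W ≤ r ^ 2 * x ^ 3 / 3 + 2 * c * x ^ 2) : W ≤ N * (l + ε / 2) := by
  have h1 := mul_le_mul_of_nonneg_right h (by positivity : 0 ≤ l + ε / 2)
  have h2 := mul_le_mul_of_nonneg_right hD3 (by positivity : 0 ≤ x ^ 2 / 6)
  have h3 : r ^ 3 * x ^ 3 / 3 * l = r ^ 2 * x ^ 3 / 3 * (l * r) := by ring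
  rw [hlr] at h3
  linarith

set_option maxHeartbeats 1000000 in
lemma numeric (d : ℕ) (hd : 1 ≤ d) (ε : ℝ) (hε : 0 < ε) :
    ∃ D n : ℕ, ∀ s W T : ℕ,
      (d : ℝ) * (D * (D + 1) / 2) - ((d : ℝ) + 2) ^ 2 * (D + 1) ≤ (s : ℝ) →
      (s : ℝ) ≤ (d : ℝ) * (D * (D + 1) / 2) + ((d : ℝ) + 2) ^ 2 * (D + 1) →
      (W : ℝ) ≤ d * (D * (D + 1) * (2 * D + 1) / 6) + ((d : ℝ) + 2) ^ 2 * (D * (D + 1) / 2) →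
      6 * T = n * (n + 1) * (n + 2) →
      ∀ B : ℝ, 1 ≤ B → ∀ p : ℕ, p.Prime → ((p : ℝ) ≥ B ^ ((1 : ℝ) / Real.sqrt d + ε)) →
      (s.factorial : ℝ) * B ^ W < (p : ℝ) ^ (n * s - T) := by
  have hd' : (1 : ℝ) ≤ d := by exact_mod_cast hd
  set r := Real.sqrt d with hr
  have hr2 : r ^ 2 = d := Real.sq_sqrt (by positivity)
  have hr1 : 1 ≤ r := by rw [hr]; exact Real.one_le_sqrt.mpr hd'
  have hr0 : 0 < r := by linarith
  set c := ((d : ℝ) + 2) ^ 2 with hc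
  have hc1 : 1 ≤ c := by nlinarith
  have hdc : (d : ℝ) ≤ c := by nlinarith
  set K := 2 * c * r + 2 * r ^ 2 with hK
  have hK0 : 0 < K := by positivity
  set l := 1 / r with hl
  have hl0 : 0 < l := by positivity
  have hlr : l * r = 1 := by rw [hl]; field_simp
  set η := (ε / 2) / (l + ε) with hη
  have hη0 : 0 < η := by positivity
  have hηe : η * (l + ε) = ε / 2 := by rw [hη]; field_simp
  have e1 := ev_log c (r ^ 3 / 6 * η * Real.log 2) hc1
    (by have := Real.log_pos (by norm_num : (1 : ℝ) < 2); positivity)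
  have e2 := (tendsto_natCast_atTop_atTop (R := ℝ)).eventually
    (Filter.eventually_ge_atTop (max 1 (max (6 * K / r ^ 3)
      ((K * (l + ε / 2) + 2 * c) * 6 / (ε * r ^ 3)))))
  obtain ⟨D, hD, hD'⟩ := (e1.and e2).exists
  have hD1 : (1 : ℝ) ≤ D := le_trans (le_max_left _ _) hD'
  have hD2 := le_trans (le_trans (le_max_left _ _) (le_max_right _ _)) hD'
  have hD3 := le_trans (le_trans (le_max_right _ _) (le_max_right _ _)) hD'
  clear hD' e1 e2
  rw [div_le_iff₀ (by positivity)] at hD2 hD3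
  refine ⟨D, ⌊r * D⌋₊, ?_⟩
  set n := ⌊r * D⌋₊ with hn
  intro s W T hs1 hs2 hW hT B hB p hp hpB
  generalize hx : (D : ℝ) = x at *
  have hn1 : (n : ℝ) ≤ r * x := by
    rw [hn]; exact Nat.floor_le (by positivity)
  have hn2 : r * x < n + 1 := by
    rw [hn]; exact Nat.lt_floor_add_one _
  have hn0 : (0 : ℝ) ≤ n := by positivity
  have hx2 : x ≤ x ^ 2 := by nlinarith
  have hx0 : 0 < x := by linarith
  have hs1' : r ^ 2 * x ^ 2 / 2 - 2 * c * x ≤ s := by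
    rw [hr2]; exact aux1 d x c s hd' hc1 hD1 hs1
  have hs2' : (s : ℝ) ≤ 4 * c * x ^ 2 := aux2 d x c s hd' hdc hD1 hs2
  have hW' : (W : ℝ) ≤ r ^ 2 * x ^ 3 / 3 + 2 * c * x ^ 2 := by
    rw [hr2]; exact aux3 d x c W hd' hdc hD1 hW
  have hT' : (T : ℝ) * 6 ≤ r ^ 3 * x ^ 3 + 5 * r ^ 2 * x ^ 2 := by
    have h1 : (T : ℝ) * 6 = n * (n + 1) * (n + 2) := by
      rw [mul_comm]; exact_mod_cast hT
    rw [h1]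
    exact aux4 r x n hr1 hD1 hn0 hn1
  set N : ℝ := n * s - T with hN
  have hNl : r ^ 3 * x ^ 3 / 3 - K * x ^ 2 ≤ N := by
    rw [hN, hK]
    exact aux5 r x n s T c hr1 hD1 (by linarith) hn0 hn1 hn2 hs1' hT'
  have hNl2 : r ^ 3 * x ^ 3 / 6 ≤ N := by
    exact aux6 r x K N hD2 hNl
  have hN0 : 0 < N := lt_of_lt_of_le (by positivity) hNl2
  have hNW : (W : ℝ) ≤ N * (l + ε / 2) := by
    exact aux7 r x K N l ε c W hl0 hε hlr hNl hD3 hW'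
  have hlog2 : 0 < Real.log 2 := Real.log_pos (by norm_num)
  have hfac : Real.log (s.factorial) < N * (η * Real.log 2) := by
    have h0 : Real.log (s.factorial) ≤ s * Real.log (4 * c * x ^ 2) := by
      rcases Nat.eq_zero_or_pos s with h | h
      · subst h; simp
      · have hs0 : (0 : ℝ) < s := by exact_mod_cast h
        have : (s.factorial : ℝ) ≤ (s : ℝ) ^ s := by exact_mod_cast Nat.factorial_le_pow s
        calc Real.log (s.factorial) ≤ Real.log ((s : ℝ) ^ s) :=
              Real.log_le_log (by positivity) this
          _ = s * Real.log s := Real.log_pow _ _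
          _ ≤ _ := mul_le_mul_of_nonneg_left (Real.log_le_log hs0 hs2') hs0.le
    have hlg : 0 ≤ Real.log (4 * c * x ^ 2) := Real.log_nonneg (by
      have : 1 ≤ c * x ^ 2 := one_le_mul_of_one_le_of_one_le hc1 (one_le_pow₀ hD1)
      linarith)
    calc Real.log (s.factorial) ≤ s * Real.log (4 * c * x ^ 2) := h0
      _ ≤ 4 * c * x ^ 2 * Real.log (4 * c * x ^ 2) := mul_le_mul_of_nonneg_right hs2' hlg
      _ = (4 * c * Real.log (4 * c * x ^ 2)) * x ^ 2 := by ring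
      _ < (r ^ 3 / 6 * η * Real.log 2 * x) * x ^ 2 :=
          mul_lt_mul_of_pos_right hD (by positivity)
      _ = (r ^ 3 * x ^ 3 / 6) * (η * Real.log 2) := by ring
      _ ≤ _ := mul_le_mul_of_nonneg_right hNl2 (by positivity)
  have hB0 : 0 < B := by linarith
  have hL : 0 ≤ Real.log B := Real.log_nonneg hB
  have hp0 : (0 : ℝ) < p := by exact_mod_cast hp.pos
  have hp2 : Real.log 2 ≤ Real.log p :=
    Real.log_le_log (by norm_num) (by exact_mod_cast hp.two_le)
  have hpL : (l + ε) * Real.log B ≤ Real.log p := by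
    rw [← Real.log_rpow hB0]
    exact Real.log_le_log (Real.rpow_pos_of_pos hB0 _) hpB
  have hη1 : η ≤ 1 := by
    rw [hη, div_le_one (by positivity)]; linarith
  have hNat : N ≤ ((n * s - T : ℕ) : ℝ) := by
    rw [hN, sub_le_iff_le_add]
    have : n * s ≤ (n * s - T) + T := by omega
    exact_mod_cast this
  rw [← Real.log_lt_log_iff (by positivity) (by positivity),
    Real.log_mul (by positivity) (by positivity), Real.log_pow, Real.log_pow]
  have k1 : (1 - η) * ((l + ε) * Real.log B) ≤ (1 - η) * Real.log p :=
    mul_le_mul_of_nonneg_left hpL (by linarith)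
  have k2 : η * Real.log 2 ≤ η * Real.log p := mul_le_mul_of_nonneg_left hp2 hη0.le
  have k3 : (1 - η) * ((l + ε) * Real.log B) = (l + ε / 2) * Real.log B := by
    linear_combination (-Real.log B) * hηe
  have k4 : N * ((l + ε / 2) * Real.log B + η * Real.log 2) ≤ N * Real.log p :=
    mul_le_mul_of_nonneg_left (by linarith) hN0.le
  have k5 : W * Real.log B ≤ N * (l + ε / 2) * Real.log B :=
    mul_le_mul_of_nonneg_right hNW hL
  have k6 : N * Real.log p ≤ ((n * s - T : ℕ) : ℝ) * Real.log p :=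
    mul_le_mul_of_nonneg_right hNat (by linarith)
  linarith

lemma linalg {ι α : Type*} [Fintype ι] [DecidableEq ι] (S : Set α) (w : α → ι → ℚ)
    (h : ∀ x : ι → α, (∀ i, x i ∈ S) → Matrix.det (fun i k => w (x i) k) = 0) :
    ∃ c : ι → ℚ, c ≠ 0 ∧ ∀ x ∈ S, ∑ k, c k * w x k = 0 := by
  by_cases hV : Submodule.span ℚ (w '' S) = ⊤
  · exfalso
    obtain ⟨t, ht, hsp, hli⟩ := exists_linearIndependent ℚ (w '' S)
    rw [hV] at hsp
    let b : Module.Basis t ℚ (ι → ℚ) := Module.Basis.mk hli (by simp [hsp])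
    let e : ι ≃ t := (Pi.basisFun ℚ ι).indexEquiv b
    have hx : ∀ i : ι, ∃ x ∈ S, w x = (e i : ι → ℚ) := fun i => ht (e i).2
    choose x hxS hxw using hx
    have h0 := h x hxS
    have hli' : LinearIndependent ℚ (fun i => w (x i)) := by
      have := hli.comp e e.injective
      have e2 : (fun i => w (x i)) = Subtype.val ∘ e := funext hxw
      rw [e2]
      exact this
    have hu := (Matrix.linearIndependent_rows_iff_isUnit (A := (fun i k => w (x i) k))).mp hli'
    have hu' := (Matrix.isUnit_iff_isUnit_det _).mp hu
    rw [h0] at hu'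
    exact not_isUnit_zero hu'
  · obtain ⟨f, hf0, hf⟩ := Submodule.exists_le_ker_of_lt_top _ (lt_top_iff_ne_top.mpr hV)
    have hfs : ∀ v : ι → ℚ, f v = ∑ k, f (Pi.single k 1) * v k := by
      intro v
      conv_lhs => rw [pi_eq_sum_univ' v]
      simp [mul_comm]
    refine ⟨fun k => f (Pi.single k 1), ?_, ?_⟩
    · intro hz
      apply hf0
      ext v
      have := congrFun hz v
      simpa using this
    · intro x hx
      rw [← hfs]
      exact hf (Submodule.subset_span ⟨x, hx, rfl⟩)

lemma det_bound {ι : Type*} [Fintype ι] [DecidableEq ι] (M : Matrix ι ι ℝ) (b : ι → ℝ)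
    (h : ∀ i k, |M i k| ≤ b k) : |M.det| ≤ (Fintype.card ι).factorial * ∏ k, b k := by
  rw [Matrix.det_apply']
  refine (Finset.abs_sum_le_sum_abs _ _).trans ?_
  have : ∀ σ ∈ (Finset.univ : Finset (Equiv.Perm ι)),
      |((Equiv.Perm.sign σ : ℤ) : ℝ) * ∏ i, M (σ i) i| ≤ ∏ k, b k := by
    intro σ _
    rw [abs_mul]
    have h1 : |((Equiv.Perm.sign σ : ℤ) : ℝ)| = 1 := by
      rcases Int.units_eq_one_or (Equiv.Perm.sign σ) with h | h <;> simp [h]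
    rw [h1, one_mul, Finset.abs_prod]
    exact Finset.prod_le_prod (fun _ _ => abs_nonneg _) (fun i _ => h _ _)
  refine (Finset.sum_le_card_nsmul _ _ _ this).trans ?_
  simp [Fintype.card_perm]

end S11

namespace S11

/-- dehomogenization -/
noncomputable def deh : MvPolynomial (Fin 4) ℚ →+* MvPolynomial (Fin 3) ℚ :=
  (Polynomial.evalRingHom 1).comp (finSuccEquiv ℚ 3 : MvPolynomial (Fin 4) ℚ →+* _)

lemma deh_apply (F : MvPolynomial (Fin 4) ℚ) : deh F = (finSuccEquiv ℚ 3 F).eval 1 := rfl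

lemma coeff_deh (F : MvPolynomial (Fin 4) ℚ) (m : Fin 3 →₀ ℕ) :
    coeff m (deh F) = ∑ i ∈ Finset.range ((finSuccEquiv ℚ 3 F).natDegree + 1),
      coeff (m.cons i) F := by
  rw [deh_apply, Polynomial.eval_eq_sum_range, coeff_sum]
  refine Finset.sum_congr rfl fun i _ => ?_
  rw [one_pow, mul_one, finSuccEquiv_coeff_coeff]

lemma degree_cons (m : Fin 3 →₀ ℕ) (i : ℕ) : (m.cons i).degree = i + m.degree := by
  rw [Finsupp.degree_eq_sum, Finsupp.degree_eq_sum, Fin.sum_univ_succ]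
  simp

lemma homog_coeff {σ R : Type*} [CommSemiring R] {F : MvPolynomial σ R} {d : ℕ}
    (hF : F.IsHomogeneous d) {m : σ →₀ ℕ} (h : coeff m F ≠ 0) : m.degree = d := by
  by_contra hne
  exact h (hF.coeff_eq_zero hne)

lemma deh_degree (F : MvPolynomial (Fin 4) ℤ) (d : ℕ) (hF : F.IsHomogeneous d)
    (hX : ¬ (X 0 ∣ F)) :
    deh (MvPolynomial.map (Int.castRingHom ℚ) F) ≠ 0 ∧
    (deh (MvPolynomial.map (Int.castRingHom ℚ) F)).totalDegree = d := by
  have hex : ∃ m, coeff m F ≠ 0 ∧ m 0 = 0 := by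
    by_contra hcon
    push Not at hcon
    apply hX
    rw [F.as_sum]
    refine Finset.dvd_sum fun m hm => ?_
    rw [X_dvd_monomial]
    exact Or.inr (hcon m (mem_support_iff.mp hm))
  obtain ⟨m, hm, hm0⟩ := hex
  have hFQ : (MvPolynomial.map (Int.castRingHom ℚ) F).IsHomogeneous d := hF.map _
  set FQ := MvPolynomial.map (Int.castRingHom ℚ) F with hFQd
  have hmQ : coeff m FQ ≠ 0 := by
    rw [hFQd, coeff_map]; simpa using hm
  have hmc : m.tail.cons 0 = m := by rw [← hm0]; exact Finsupp.cons_tail m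
  have hmd : m.tail.degree = d := by
    have := homog_coeff hFQ hmQ
    rw [← hmc, degree_cons] at this
    omega
  have hc : coeff m.tail (deh FQ) ≠ 0 := by
    rw [coeff_deh, Finset.sum_eq_single 0]
    · rwa [hmc]
    · intro i _ hi
      by_contra hne
      have := homog_coeff hFQ hne
      rw [degree_cons] at this
      omega
    · simp
  refine ⟨fun h => hc (by rw [h]; simp), le_antisymm ?_ ?_⟩
  · refine Finset.sup_le fun m' hm' => ?_
    change m'.degree ≤ d
    rw [mem_support_iff, coeff_deh] at hm'
    obtain ⟨i, _, hi⟩ := Finset.exists_ne_zero_of_sum_ne_zero hm'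
    have := homog_coeff hFQ hi
    rw [degree_cons] at this
    omega
  · rw [← hmd]
    exact le_totalDegree (mem_support_iff.mpr hc)

lemma not_dvd_red (f g : MvPolynomial (Fin 3) ℚ) (hg : g ≠ 0)
    (h : ∀ m ∈ g.support, ¬ MonomialOrder.degLex.degree f ≤ m) : ¬ f ∣ g := by
  rintro ⟨q, rfl⟩
  have h1 : f ≠ 0 := left_ne_zero_of_mul hg
  have h2 : q ≠ 0 := right_ne_zero_of_mul hg
  apply h _ (MonomialOrder.degLex.degree_mem_support hg)
  rw [MonomialOrder.degree_mul h1 h2]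
  exact le_self_add

/-- the homogenized combination -/
noncomputable def Gp (D : ℕ) (s : Finset (Fin 3 →₀ ℕ)) (c : s → ℚ) : MvPolynomial (Fin 4) ℚ :=
  ∑ m : s, rename Fin.succ (monomial m.1 (c m)) * X 0 ^ (D - m.1.degree)

lemma Gp_homog (D : ℕ) (s : Finset (Fin 3 →₀ ℕ)) (c : s → ℚ) (hs : ∀ m ∈ s, m.degree ≤ D) :
    (Gp D s c).IsHomogeneous D := by
  refine IsHomogeneous.sum _ _ _ fun m _ => ?_
  have h1 : (rename (Fin.succ : Fin 3 → Fin 4) (monomial m.1 (c m))).IsHomogeneous m.1.degree :=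
    (isHomogeneous_monomial _ rfl).rename_isHomogeneous
  have h2 := h1.mul ((isHomogeneous_X ℚ (0 : Fin 4)).pow (D - m.1.degree))
  have := hs m.1 m.2
  convert h2 using 1
  omega

lemma deh_rename (g : MvPolynomial (Fin 3) ℚ) : deh (rename Fin.succ g) = g := by
  induction g using MvPolynomial.induction_on with
  | C a => simp [deh_apply, finSuccEquiv_apply]
  | add f g hf hg => rw [map_add, map_add, hf, hg]
  | mul_X f j hf =>
    rw [map_mul, map_mul, hf, rename_X, deh_apply, finSuccEquiv_X_succ]
    simp

lemma deh_Gp (D : ℕ) (s : Finset (Fin 3 →₀ ℕ)) (c : s → ℚ) :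
    deh (Gp D s c) = ∑ m : s, monomial m.1 (c m) := by
  rw [Gp, map_sum]
  refine Finset.sum_congr rfl fun m _ => ?_
  rw [map_mul, deh_rename, map_pow, deh_apply, finSuccEquiv_X_zero]
  simp

lemma coeff_comb (s : Finset (Fin 3 →₀ ℕ)) (c : s → ℚ) (m : Fin 3 →₀ ℕ) :
    coeff m (∑ m : s, monomial m.1 (c m)) = if h : m ∈ s then c ⟨m, h⟩ else 0 := by
  rw [coeff_sum]
  simp only [coeff_monomial]
  split_ifs with h
  · rw [Finset.sum_eq_single ⟨m, h⟩]
    · simp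
    · intro b _ hb
      rw [if_neg]
      intro h'
      exact hb (Subtype.ext h')
    · simp
  · apply Finset.sum_eq_zero
    intro b _
    rw [if_neg]
    rintro rfl
    exact h b.2

lemma Gp_not_dvd (D : ℕ) (F : MvPolynomial (Fin 4) ℚ) (s : Finset (Fin 3 →₀ ℕ)) (c : s → ℚ)
    (hc : c ≠ 0) (hs : ∀ m ∈ s, ¬ MonomialOrder.degLex.degree (deh F) ≤ m) :
    ¬ F ∣ Gp D s c := by
  intro h
  have h1 : deh F ∣ deh (Gp D s c) := map_dvd deh h
  rw [deh_Gp] at h1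
  refine not_dvd_red _ _ ?_ ?_ h1
  · intro h0
    apply hc
    funext m
    have := coeff_comb s c m.1
    rw [h0] at this
    simpa using this.symm
  · intro m hm
    rw [mem_support_iff, coeff_comb] at hm
    by_cases h' : m ∈ s
    · exact hs m h'
    · simp [h'] at hm

lemma eval_Gp (D : ℕ) (s : Finset (Fin 3 →₀ ℕ)) (c : s → ℚ) (x : Fin 4 → ℚ) (hx : x 0 = 1) :
    eval x (Gp D s c) = ∑ m : s, c m * ∏ i : Fin 3, x i.succ ^ m.1 i := by
  rw [Gp, map_sum]
  refine Finset.sum_congr rfl fun m _ => ?_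
  rw [map_mul, eval_rename, eval_monomial, map_pow, eval_X, hx, one_pow, mul_one,
    Finsupp.prod_fintype _ _ (by simp)]
  rfl

lemma eval_smul_homog {σ R : Type*} [CommSemiring R] (F : MvPolynomial σ R) (d : ℕ)
    (hF : F.IsHomogeneous d) (c : R) (v : σ → R) : eval (c • v) F = c ^ d * eval v F := by
  rw [eval_eq, eval_eq, Finset.mul_sum]
  refine Finset.sum_congr rfl fun m hm => ?_
  have h1 : m.degree = d := homog_coeff hF (mem_support_iff.mp hm)
  simp only [Pi.smul_apply, smul_eq_mul, mul_pow]
  rw [Finset.prod_mul_distrib, Finset.prod_pow_eq_pow_sum]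
  have h2 : ∑ i ∈ m.support, m i = d := by rw [← h1]; rfl
  rw [h2]
  ring

lemma eval_cast (p : ℕ) (ξ : Fin 4 → ℤ) (g : MvPolynomial (Fin 4) ℤ) :
    eval (fun i => (ξ i : ZMod p)) (MvPolynomial.map (Int.castRingHom (ZMod p)) g)
      = ((eval ξ g : ℤ) : ZMod p) := by
  induction g using MvPolynomial.induction_on with
  | C a => simp
  | add f g hf hg => simp only [map_add, hf, hg, Int.cast_add]
  | mul_X f j hf => simp only [map_mul, hf, map_X, eval_X, Int.cast_mul]

/-- a non-homogeneous partial derivative is nonzero at the reduction -/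
lemma exists_deriv (p : ℕ) [Fact p.Prime] (d : ℕ) (F : MvPolynomial (Fin 4) ℤ)
    (hF : F.IsHomogeneous d) (v : Fin 4 → ZMod p)
    (hd : ∃ i, eval v (pderiv i (MvPolynomial.map (Int.castRingHom (ZMod p)) F)) ≠ 0)
    (ξ : Fin 4 → ℤ) (h0 : ξ 0 = 1) (hξ : eval ξ F = 0) (hred : ReducesTo p ξ v) :
    ∃ i, i ≠ 0 ∧ ¬ (p : ℤ) ∣ eval ξ (pderiv i F) := by
  obtain ⟨c, hc, hcv⟩ := hred
  obtain ⟨i, hi⟩ := hd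
  have h1 : ∃ i, ((eval ξ (pderiv i F) : ℤ) : ZMod p) ≠ 0 := by
    refine ⟨i, ?_⟩
    rw [← eval_cast, hcv, ← pderiv_map, eval_smul_homog _ (d - 1) (hF.map _).pderiv]
    exact mul_ne_zero (pow_ne_zero _ hc) hi
  have h2 : ∃ i, ¬ (p : ℤ) ∣ eval ξ (pderiv i F) := by
    obtain ⟨i, hi⟩ := h1
    refine ⟨i, fun h => hi ?_⟩
    rwa [ZMod.intCast_zmod_eq_zero_iff_dvd]
  by_contra hcon
  push Not at hcon
  obtain ⟨k, hk⟩ := h2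
  by_cases hk0 : k = 0
  · subst hk0
    have hE := congrArg (eval ξ) hF.sum_X_mul_pderiv
    rw [map_sum, Fin.sum_univ_succ] at hE
    simp only [map_mul, eval_X, h0, one_mul, map_nsmul, hξ, smul_zero] at hE
    apply hk
    rw [eq_neg_of_add_eq_zero_left hE, dvd_neg]
    exact Finset.dvd_sum fun i _ => Dvd.dvd.mul_left (hcon i.succ (Fin.succ_ne_zero i)) _
  · exact hk (hcon k hk0)

lemma same_red (p : ℕ) [Fact p.Prime] (v : Fin 4 → ZMod p) (ξ ξ₀ : Fin 4 → ℤ)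
    (h : ξ 0 = 1) (h0 : ξ₀ 0 = 1) (hr : ReducesTo p ξ v) (hr0 : ReducesTo p ξ₀ v) (l : Fin 4) :
    (p : ℤ) ∣ ξ l - ξ₀ l := by
  obtain ⟨c, hc, hcv⟩ := hr
  obtain ⟨c', hc', hcv'⟩ := hr0
  have e1 := congrFun hcv 0
  have e2 := congrFun hcv' 0
  simp only [h, h0, Pi.smul_apply, smul_eq_mul, Int.cast_one] at e1 e2
  have hv : v 0 ≠ 0 := by
    intro hv; rw [hv] at e1; simp at e1
  have hcc : c = c' := mul_right_cancel₀ hv (e1.symm.trans e2)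
  have e3 : (ξ l : ZMod p) = (c • v) l := congrFun hcv l
  have e4 : (ξ₀ l : ZMod p) = (c' • v) l := congrFun hcv' l
  rw [← ZMod.intCast_zmod_eq_zero_iff_dvd, Int.cast_sub]
  rw [e3, e4, hcc, sub_self]

lemma choose_jk (i : Fin 4) (hi : i ≠ 0) :
    ∃ j k : Fin 4, j ≠ k ∧ ∀ l, l = 0 ∨ l = i ∨ l = j ∨ l = k := by
  revert i; decide

lemma det_zero (d : ℕ) (F : MvPolynomial (Fin 4) ℤ) (hF : F.IsHomogeneous d)
    (B : ℝ) (hB : 1 ≤ B) (p : ℕ) (hp : p.Prime) (v : Fin 4 → ZMod p)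
    (hd : ∃ i, eval v (pderiv i (MvPolynomial.map (Int.castRingHom (ZMod p)) F)) ≠ 0)
    (s : Finset (Fin 3 →₀ ℕ)) (n T : ℕ) (hT : T = ∑ a : J n, (n - a.1.val))
    (hnum : (s.card.factorial : ℝ) * B ^ (∑ m ∈ s, m.degree) < (p : ℝ) ^ (n * s.card - T))
    (x : s → Fin 4 → ℤ) (hx0 : ∀ a, x a 0 = 1) (hxB : ∀ a m, m ≠ 0 → (|x a m| : ℝ) ≤ B)
    (hxF : ∀ a, eval (x a) F = 0) (hxr : ∀ a, ReducesTo p (x a) v) :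
    Matrix.det (fun (a m : s) => ∏ i : Fin 3, x a i.succ ^ m.1 i) = 0 := by
  have : Fact p.Prime := ⟨hp⟩
  rcases s.eq_empty_or_nonempty with hs | ⟨m₀, hm₀⟩
  · exfalso
    subst hs
    simp at hnum
  obtain ⟨i, hi, hD⟩ := exists_deriv p d F hF v hd (x ⟨m₀, hm₀⟩) (hx0 _) (hxF _) (hxr _)
  obtain ⟨j, k, hjk, hall⟩ := choose_jk i hi
  set ξ₀ := x ⟨m₀, hm₀⟩ with hξ₀
  have hloc := fun m : s => local_exp F p hp ξ₀ i j k hjk hall hD n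
    (rename Fin.succ (monomial m.1 1))
  choose c hc using hloc
  have hc' := fun (m a : s) => hc m (x a) ((hx0 a).trans (hx0 _).symm)
    (same_red p v (x a) ξ₀ (hx0 a) (hx0 _) (hxr a) (hxr _)) (hxF a)
  choose r hr using hc'
  have hev : ∀ m a : s, eval (x a) (rename Fin.succ (monomial m.1 (1 : ℤ)))
      = ∏ i : Fin 3, x a i.succ ^ m.1 i := by
    intro m a
    rw [eval_rename, eval_monomial, one_mul, Finsupp.prod_fintype _ _ (by simp)]
    rfl
  have hdvd := det_dvd (p : ℤ) n (fun a : J n => a.1.val) (fun a => a.1.2.le)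
    (fun a m => c m a)
    (fun a b => ((x a j - ξ₀ j) / p) ^ b.2.val * ((x a k - ξ₀ k) / p) ^ (b.1.val - b.2.val))
    (fun a m => r m a) (fun (a m : s) => ∏ i : Fin 3, x a i.succ ^ m.1 i)
    (fun a m => by rw [← hev, hr m a])
  rw [← hT, Fintype.card_coe] at hdvd
  set M : Matrix s s ℤ := fun (a m : s) => ∏ i : Fin 3, x a i.succ ^ m.1 i with hM
  have hbd : |((M.det : ℤ) : ℝ)| ≤ (s.card.factorial : ℝ) * B ^ (∑ m ∈ s, m.degree) := by
    have := det_bound (M.map (Int.cast : ℤ → ℝ)) (fun m : s => B ^ m.1.degree) (by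
      intro a m
      change |((∏ i : Fin 3, x a i.succ ^ m.1 i : ℤ) : ℝ)| ≤ B ^ m.1.degree
      simp only [Int.cast_prod, Int.cast_pow, Finset.abs_prod, abs_pow]
      rw [Finsupp.degree_eq_sum, ← Finset.prod_pow_eq_pow_sum]
      refine Finset.prod_le_prod (fun _ _ => by positivity) fun i _ => ?_
      exact pow_le_pow_left₀ (abs_nonneg _) (hxB a i.succ (Fin.succ_ne_zero i)) _)
    rw [Fintype.card_coe, Finset.prod_pow_eq_pow_sum,
      Finset.sum_coe_sort s (fun m => m.degree)] at this
    have e : (M.map (Int.cast : ℤ → ℝ)).det = ((M.det : ℤ) : ℝ) :=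
      (Int.cast_det M).symm
    rwa [e] at this
  apply Int.eq_zero_of_abs_lt_dvd hdvd
  have := lt_of_le_of_lt hbd hnum
  exact_mod_cast this

end S11

theorem stmt_11 (d : ℕ) (hd : 1 ≤ d) (ε : ℝ) (hε : 0 < ε) :
    ∃ C : ℕ, ∀ F : MvPolynomial (Fin 4) ℤ,
      (∀ c : ℤ, (∀ m, c ∣ F.coeff m) → IsUnit c) →
      F.IsHomogeneous d →
      Irreducible (MvPolynomial.map (Int.castRingHom ℚ) F) →
      ¬ (X 0 ∣ F) →
      ∀ B : ℝ, 1 ≤ B →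
      ∀ p : ℕ, p.Prime → ((p : ℝ) ≥ B ^ ((1 : ℝ) / Real.sqrt d + ε)) →
      ∀ v : Fin 4 → ZMod p, v ≠ 0 →
        eval v (MvPolynomial.map (Int.castRingHom (ZMod p)) F) = 0 →
        (∃ i, eval v (pderiv i (MvPolynomial.map (Int.castRingHom (ZMod p)) F)) ≠ 0) →
      ∃ G : MvPolynomial (Fin 4) ℚ, ∃ e ≤ C, G.IsHomogeneous e ∧
        ¬ (MvPolynomial.map (Int.castRingHom ℚ) F ∣ G) ∧
        ∀ ξ : Fin 4 → ℤ, ξ 0 = 1 →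
          (∀ m, m ≠ 0 → (|ξ m| : ℝ) ≤ B) → eval ξ F = 0 →
          ReducesTo p ξ v →
          eval (fun m => (ξ m : ℚ)) G = 0 := by
  obtain ⟨D, n, hnum⟩ := S11.numeric d hd ε hε
  refine ⟨D, ?_⟩
  intro F _ hF _ hX B hB p hp hpB v _ _ hder
  obtain ⟨_, hdeg⟩ := S11.deh_degree F d hF hX
  set FQ := MvPolynomial.map (Int.castRingHom ℚ) F
  set a := MonomialOrder.degLex.degree (S11.deh FQ) with ha
  have had : a.degree = d := by
    rw [ha, MvPolynomial.degree_degLexDegree, hdeg]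
  obtain ⟨b1, b2, b3⟩ := S11.MS_bounds a d had D
  have hn := hnum _ _ _ b1 b2 b3 (S11.sumJ n) B hB p hp hpB
  obtain ⟨c, hc0, hc⟩ := S11.linalg
    {ξ : Fin 4 → ℤ | ξ 0 = 1 ∧ (∀ m, m ≠ 0 → (|ξ m| : ℝ) ≤ B) ∧ eval ξ F = 0 ∧ ReducesTo p ξ v}
    (fun ξ (m : S11.MS a D) => ∏ i : Fin 3, (ξ i.succ : ℚ) ^ m.1 i) (by
      intro x hx
      have := S11.det_zero d F hF B hB p hp v hder (S11.MS a D) n _ rfl hn x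
        (fun i => (hx i).1) (fun i => (hx i).2.1) (fun i => (hx i).2.2.1) (fun i => (hx i).2.2.2)
      have h2 := congrArg (Int.cast : ℤ → ℚ) this
      have h3 := (Int.cast_det (R := ℚ)
        (fun (u m : S11.MS a D) => ∏ i : Fin 3, x u i.succ ^ m.1 i)).symm.trans h2
      rw [Int.cast_zero] at h3
      refine Eq.trans ?_ h3
      congr 1
      funext i m
      change _ = ((∏ j : Fin 3, x i j.succ ^ m.1 j : ℤ) : ℚ)
      simp)
  refine ⟨S11.Gp D (S11.MS a D) c, D, le_rfl, ?_, ?_, ?_⟩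
  · exact S11.Gp_homog D _ c fun m hm => ((S11.mem_MS a D m).mp hm).1
  · exact S11.Gp_not_dvd D FQ _ c hc0 fun m hm => ((S11.mem_MS a D m).mp hm).2
  · intro ξ h0 h1 h2 h3
    rw [S11.eval_Gp _ _ _ _ (by simp [h0])]
    exact hc ξ ⟨h0, h1, h2, h3⟩
end

section
/- Let d ≥ 2. There exists a constant C = C(d) with the following property. Let F ∈ ℤ[x_0,x_1,x_2,x_3] be a primitive homogeneous polynomial of degree d which is irreducible over ℚ, defining X = {F = 0} ⊂ P^3, and let B ≥ 1 be real. Then either there exists a homogeneous polynomial G ∈ ℚ[x_0,x_1,x_2,x_3] of degree d, not a scalar multiple of F, which vanishes at every rational point of X of height at most B, or H(F) ≤ C·B^{d(d+1)(d+2)(d+3)/6}, where H(F) denotes the maximum of the absolute values of the coefficients of F. -/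
open MvPolynomial

theorem aux_core {ι : Type} [Fintype ι] [DecidableEq ι] (f : ι → ℤ)
    (prim : ∀ c : ℤ, (∀ i, c ∣ f i) → IsUnit c) (hf : f ≠ 0) (R : Set (ι → ℤ))
    (hR : ∀ r ∈ R, ∑ i, r i * f i = 0) (K : ℝ) (hK : 1 ≤ K)
    (hb : ∀ r ∈ R, ∀ i, ((|r i| : ℤ) : ℝ) ≤ K)
    (hker : ∀ g : ι → ℚ, (∀ r ∈ R, ∑ i, (r i : ℚ) * g i = 0) →
      ∃ c : ℚ, ∀ i, g i = c * f i) (i : ι) :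
    ((|f i| : ℤ) : ℝ) ≤ (Fintype.card ι).factorial * K ^ (Fintype.card ι) := by
  obtain ⟨m0, hm0⟩ := Function.ne_iff.mp hf
  simp only [Pi.zero_apply] at hm0
  let cast : (ι → ℤ) → (ι → ℚ) := fun r i => (r i : ℚ)
  let T : Set (ι → ℤ) := insert (Pi.single m0 1) R
  have hspan : Submodule.span ℚ (cast '' T) = ⊤ := by
    by_contra hne
    obtain ⟨φ, hφ, hle⟩ := Submodule.exists_le_ker_of_lt_top _ (lt_top_iff_ne_top.mpr hne)
    have hφx : ∀ x, φ x = ∑ i, x i * φ (Pi.single i 1) := by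
      intro x
      rw [LinearMap.pi_apply_eq_sum_univ φ x]
      refine Finset.sum_congr rfl fun j _ => ?_
      rw [smul_eq_mul]
      congr 2
      ext k
      simp [Pi.single_apply, eq_comm]
    have hT : ∀ r ∈ T, φ (cast r) = 0 := fun r hr =>
      hle (Submodule.subset_span ⟨r, hr, rfl⟩)
    obtain ⟨c, hc⟩ := hker (fun i => φ (Pi.single i 1)) (by
      intro r hr
      have := hT r (Set.mem_insert_of_mem _ hr)
      rwa [hφx] at this)
    have h0 : φ (Pi.single m0 1) = 0 := by
      have := hT _ (Set.mem_insert _ _)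
      rwa [show cast (Pi.single m0 1) = Pi.single m0 1 by
        ext k; simp [cast, Pi.single_apply]] at this
    have hc0 : c = 0 := by
      have := hc m0
      simp only [h0] at this
      rcases mul_eq_zero.mp this.symm with h | h
      · exact h
      · exact absurd (by exact_mod_cast h) hm0
    apply hφ
    ext x
    simp [hc, hc0]
  obtain ⟨b, hbT, hbs, hbl⟩ := exists_linearIndependent ℚ (cast '' T)
  rw [hspan] at hbs
  let bas : Module.Basis b ℚ (ι → ℚ) := Module.Basis.mk hbl (by
    rw [Subtype.range_coe, hbs])
  let e : ι ≃ b := (Pi.basisFun ℚ ι).indexEquiv bas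
  have hlift : ∀ j : ι, ∃ r ∈ T, cast r = (e j : ι → ℚ) := fun j => hbT (e j).2
  choose M hMT hM using hlift
  let A : Matrix ι ι ℤ := Matrix.of M
  have hdet : A.det ≠ 0 := by
    have hli : LinearIndependent ℚ (A.map (Int.castRingHom ℚ)).row := by
      have h1 := hbl.comp e e.injective
      have h2 : (A.map (Int.castRingHom ℚ)).row = (Subtype.val ∘ e : ι → ι → ℚ) := by
        ext j k
        have := congrFun (hM j) k
        simpa [A, cast] using this
      rw [h2]
      exact h1
    rw [Matrix.linearIndependent_rows_iff_isUnit, Matrix.isUnit_iff_isUnit_det] at hli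
    intro h
    have h2 := RingHom.map_det (Int.castRingHom ℚ) A
    rw [h] at h2
    simp only [RingHom.mapMatrix_apply] at h2
    rw [← h2] at hli
    simp at hli
  have hTK : ∀ r ∈ T, ∀ i, ((|r i| : ℤ) : ℝ) ≤ K := by
    intro r hr i
    rcases hr with rfl | hr
    · by_cases h : i = m0
      · subst h; simpa using hK
      · simp [h]; linarith
    · exact hb r hr i
  have hw : ∀ j, ∃ w : ℤ, ((|w| : ℤ) : ℝ) ≤ K ∧ ∑ i, M j i * f i = f m0 * w := by
    intro j
    rcases hMT j with h | h
    · refine ⟨1, by simpa using hK, ?_⟩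
      rw [h]; simp [Pi.single_apply]
    · exact ⟨0, by simp; linarith, by rw [hR _ h]; simp⟩
  choose w hwK hwf using hw
  have hAf : A.mulVec f = f m0 • w := by
    ext j
    simpa [Matrix.mulVec, dotProduct, A] using hwf j
  have hcr : ∀ j, A.det * f j = f m0 * A.cramer w j := by
    intro j
    have h1 : A.adjugate.mulVec (A.mulVec f) = A.det • f := by
      rw [Matrix.mulVec_mulVec, Matrix.adjugate_mul, Matrix.smul_mulVec, Matrix.one_mulVec]
    rw [hAf, Matrix.mulVec_smul, ← Matrix.cramer_eq_adjugate_mulVec] at h1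
    have := congrFun h1 j
    simpa using this.symm
  have hdvd : f m0 ∣ A.det := by
    have h1 : f m0 ∣ Finset.univ.gcd (fun j => A.det * f j) :=
      Finset.dvd_gcd fun j _ => ⟨_, hcr j⟩
    rw [Finset.gcd_mul_left] at h1
    have h2 : IsUnit (Finset.univ.gcd f) :=
      prim _ fun j => Finset.gcd_dvd (Finset.mem_univ j)
    rw [h2.dvd_mul_right] at h1
    simpa using h1
  obtain ⟨k, hk⟩ := hdvd
  have hk0 : k ≠ 0 := by rintro rfl; simp at hk; exact hdet hk
  have hkf : k * f i = A.cramer w i := by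
    have := hcr i
    rw [hk, mul_assoc] at this
    exact mul_left_cancel₀ hm0 this
  have hle : |f i| ≤ |A.cramer w i| := by
    rw [← hkf, abs_mul]
    exact le_mul_of_one_le_left (abs_nonneg _) (Int.one_le_abs hk0)
  have hdl : ((|A.cramer w i| : ℤ) : ℝ) ≤ (Fintype.card ι).factorial * K ^ (Fintype.card ι) := by
    rw [Matrix.cramer_apply]
    have h3 := RingHom.map_det (Int.castRingHom ℝ) (A.updateCol i w)
    have := Matrix.det_le (A := (Int.castRingHom ℝ).mapMatrix (A.updateCol i w))
      (abv := AbsoluteValue.abs) (x := K) (by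
        intro p q
        simp only [RingHom.mapMatrix_apply, Matrix.map_apply, Matrix.updateCol_apply]
        split_ifs
        · simpa using hwK p
        · simpa [A] using hTK _ (hMT p) q)
    rw [← h3] at this
    simpa using this
  exact le_trans (by exact_mod_cast hle) hdl

theorem aux_card (d : ℕ) :
    6 * (Finset.finsuppAntidiag (Finset.univ : Finset (Fin 4)) d).card
      = (d + 1) * (d + 2) * (d + 3) := by
  rw [Finset.card_finsuppAntidiag_nat_eq_choose]
  have h : (Finset.univ : Finset (Fin 4)).card + d - 1 = d + 3 := by simp; omega
  rw [h, Nat.choose_symm_add]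
  have := Nat.descFactorial_eq_factorial_mul_choose (d + 3) 3
  have h6 : Nat.factorial 3 = 6 := rfl
  rw [h6] at this
  rw [← this]
  simp [Nat.descFactorial]
  ring

/-- Lemma 6.3 of Salberger (Browning–Heath-Brown): for an irreducible primitive
quaternary form `F` of degree `d ≥ 2` defining `X = Proj ℚ[x_0,…,x_3]/(F)`, either
there is a form `G` of degree `d`, not proportional to `F`, vanishing on `S(X;B)`, or
`H(F) ≪_d B^{d(d+1)(d+2)(d+3)/6}`, where `H(F)` is the maximum absolute value of the
coefficients of `F`. -/
theorem stmt_12 (d : ℕ) (hd : 2 ≤ d) :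
    ∃ C : ℝ, ∀ F : MvPolynomial (Fin 4) ℤ,
      (∀ c : ℤ, (∀ m, c ∣ F.coeff m) → IsUnit c) →
      F.IsHomogeneous d →
      Irreducible (MvPolynomial.map (Int.castRingHom ℚ) F) →
      ∀ B : ℝ, 1 ≤ B →
        (∃ G : MvPolynomial (Fin 4) ℚ, G.IsHomogeneous d ∧
          (¬ ∃ c : ℚ, G = c • MvPolynomial.map (Int.castRingHom ℚ) F) ∧
          ∀ ξ : Fin 4 → ℤ, Finset.univ.gcd ξ = 1 → (∀ i, (|ξ i| : ℝ) ≤ B) →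
            eval ξ F = 0 → eval (fun i => (ξ i : ℚ)) G = 0) ∨
        (∀ m, ((|F.coeff m| : ℤ) : ℝ) ≤
          C * B ^ ((d * (d + 1) * (d + 2) * (d + 3) : ℝ) / 6)) := by
  classical
  let S := Finset.finsuppAntidiag (Finset.univ : Finset (Fin 4)) d
  have hS : ∀ m : Fin 4 →₀ ℕ, m ∈ S ↔ m.degree = d := by
    intro m
    simp [S, Finset.mem_finsuppAntidiag, Finsupp.degree_eq_sum]
  refine ⟨(S.card.factorial : ℝ), ?_⟩
  intro F prim hom irr B hB
  have hB0 : (0:ℝ) ≤ B := by linarith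
  by_cases hG : (∃ G : MvPolynomial (Fin 4) ℚ, G.IsHomogeneous d ∧
          (¬ ∃ c : ℚ, G = c • MvPolynomial.map (Int.castRingHom ℚ) F) ∧
          ∀ ξ : Fin 4 → ℤ, Finset.univ.gcd ξ = 1 → (∀ i, (|ξ i| : ℝ) ≤ B) →
            eval ξ F = 0 → eval (fun i => (ξ i : ℚ)) G = 0)
  · exact Or.inl hG
  right
  have hout : ∀ m, m ∉ S → F.coeff m = 0 := fun m hm =>
    hom.coeff_eq_zero (fun h => hm ((hS m).2 h))
  have hF0 : F ≠ 0 := by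
    rintro rfl
    exact irr.ne_zero (by simp)
  have hFsum : F = ∑ m : S, monomial (m : Fin 4 →₀ ℕ) (F.coeff m) := by
    rw [Finset.sum_coe_sort S (fun m => monomial m (F.coeff m))]
    conv_lhs => rw [F.as_sum]
    refine Finset.sum_subset (fun m hm => ?_) (fun m _ hm => ?_)
    · by_contra h
      exact (mem_support_iff.mp hm) (hout m h)
    · rw [notMem_support_iff.mp hm, monomial_zero]
  have hbnd : ∀ m : S, ((|F.coeff m| : ℤ) : ℝ) ≤ S.card.factorial * (B ^ d) ^ S.card := by
    intro m
    have := aux_core (ι := S) (fun m => F.coeff m) (fun c hc => prim c fun m => by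
        by_cases hm : m ∈ S
        · exact hc ⟨m, hm⟩
        · simp [hout m hm])
      (fun h => hF0 (by
        rw [hFsum]
        exact Finset.sum_eq_zero fun m _ => by
          rw [show F.coeff m = 0 from congrFun h m, monomial_zero]))
      {r | ∃ ξ : Fin 4 → ℤ, Finset.univ.gcd ξ = 1 ∧ (∀ i, (|ξ i| : ℝ) ≤ B) ∧
            eval ξ F = 0 ∧ r = fun m : S => ∏ i, ξ i ^ (m : Fin 4 →₀ ℕ) i}
      (by
        rintro r ⟨ξ, -, -, h0, rfl⟩
        rw [hFsum, map_sum] at h0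
        rw [← h0]
        refine Finset.sum_congr rfl fun m _ => ?_
        rw [eval_monomial, Finsupp.prod_fintype _ _ (by simp), mul_comm])
      (B ^ d) (one_le_pow₀ hB)
      (by
        rintro r ⟨ξ, -, hξ, -, rfl⟩ m
        have hm := (hS m).1 m.2
        rw [Finsupp.degree_eq_sum] at hm
        rw [← hm, ← Finset.prod_pow_eq_pow_sum]
        push_cast
        rw [Finset.abs_prod]
        refine Finset.prod_le_prod (fun i _ => abs_nonneg _) (fun i _ => ?_)
        rw [abs_pow]
        exact pow_le_pow_left₀ (abs_nonneg _) (hξ i) _)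
      (by
        intro g hg
        by_contra hc
        apply hG
        have hco : ∀ m : S, coeff (m : Fin 4 →₀ ℕ)
            (∑ m : S, monomial (m : Fin 4 →₀ ℕ) (g m)) = g m := by
          intro m
          rw [coeff_sum, Finset.sum_eq_single m]
          · simp
          · intro b _ hb
            rw [coeff_monomial, if_neg]
            exact fun h => hb (Subtype.ext h)
          · simp
        refine ⟨∑ m : S, monomial (m : Fin 4 →₀ ℕ) (g m), ?_, ?_, ?_⟩
        · exact IsHomogeneous.sum _ _ _ fun m _ =>
            isHomogeneous_monomial _ ((hS m).1 m.2)
        · rintro ⟨c, h⟩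
          refine hc ⟨c, fun m => ?_⟩
          rw [← hco m, h, coeff_smul, coeff_map]
          simp
        · intro ξ h1 h2 h3
          have := hg _ ⟨ξ, h1, h2, h3, rfl⟩
          rw [map_sum, ← this]
          refine Finset.sum_congr rfl fun m _ => ?_
          rw [eval_monomial, Finsupp.prod_fintype _ _ (by simp), mul_comm]
          push_cast
          rfl)
      m
    simpa using this
  have hexp : B ^ ((d * (d + 1) * (d + 2) * (d + 3) : ℝ) / 6) = (B ^ d) ^ S.card := by
    rw [← pow_mul, ← Real.rpow_natCast]
    congr 1
    have : (6:ℝ) * S.card = (d + 1) * (d + 2) * (d + 3) := by exact_mod_cast aux_card d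
    push_cast
    linear_combination (-(d:ℝ)/6) * this
  intro m
  rw [hexp]
  by_cases hm : m ∈ S
  · exact hbnd ⟨m, hm⟩
  · rw [hout m hm]
    simp
    positivity
end
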